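/- arXiv:1810.03850 — 2 statements merged into one kernel-verified Lean document; each statement's English description precedes it below -/
import Mathlib

section
/- Let α ∈ (0,|s|), Λ > 1, K ≥ 1 and m, r ∈ ℕ. Then there exists a constant C > 0, depending only on d, s, α, Λ, K, m and r (in particular independent of ε, θ and the points), such that for every ε ∈ (0,1), every centered jointly Gaussian random field (Φ_ε(x))_{x∈ℝ^d} whose covariance (x,y) ↦ E(Φ_ε(x)Φ_ε(y)) satisfies the standing covariance bound with parameters (α, Λ, ε), every θ ∈ ℝ and all points x₁, …, x_K ∈ ℝ^d, one has |E ∏_{j=1}^{K} ∂_θ^r 𝓗_m(e^{iθΦ_ε(x_j)})| ≤ C · E ∏_{j=1}^{K} (Φ_ε(x_j)^{⋄m} + Φ_ε(x_j)^{⋄(m+1)}), where |·| on the left is the complex modulus. -/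
open MeasureTheory ProbabilityTheory Filter

noncomputable section

def anorm {d : ℕ} (s : Fin d → ℝ) (x : Fin d → ℝ) : ℝ :=
  ∑ j, |x j| ^ (1 / s j)

def CovBound {d : ℕ} (s : Fin d → ℝ) (α Λ ε : ℝ)
    (R : (Fin d → ℝ) → (Fin d → ℝ) → ℝ) : Prop :=
  ∀ x y, ε ^ α / (Λ * (anorm s (x - y) + ε) ^ α) ≤ R x y ∧
    R x y ≤ Λ * ε ^ α / (anorm s (x - y) + ε) ^ α

/-- A family of real random variables is centered jointly Gaussian if every finite real
linear combination of its members is a centered Gaussian random variable. -/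
def IsCenteredGaussianFamily {Ω ι : Type*} [MeasurableSpace Ω] (P : Measure Ω)
    (X : ι → Ω → ℝ) : Prop :=
  ∀ (A : Finset ι) (c : ι → ℝ), ∃ v : NNReal,
    Measure.map (fun ω => ∑ i ∈ A, c i * X i ω) P = gaussianReal 0 v

/-- Wick power `X^{⋄n} = σⁿ Heₙ(X/σ)` of a centered Gaussian of variance `v = σ²`. -/
def wick (v : ℝ) (n : ℕ) (x : ℝ) : ℝ :=
  Real.sqrt v ^ n * Polynomial.aeval (x / Real.sqrt v) (Polynomial.hermite n)

/-- `𝓗_m(e^{iθx})` for a centered Gaussian of variance `a`: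
`e^{iθx} − Σ_{n<m} (iⁿ/n!) θⁿ e^{−aθ²/2} x^{⋄n}`. -/
def hFun (m : ℕ) (θ x a : ℝ) : ℂ :=
  Complex.exp (Complex.I * θ * x) -
    ∑ n ∈ Finset.range m, (Complex.I ^ n / (n.factorial : ℂ)) * (θ : ℂ) ^ n *
      Complex.exp (((-(a * θ ^ 2) / 2 : ℝ) : ℂ)) * ((wick a n x : ℝ) : ℂ)

/-! Joint expectations of Wick exponentials are explicit: if `X` has covariance `R`, then
`E ∏ⱼ exp(wⱼ Xⱼ - wⱼ² Rⱼⱼ / 2) = exp(∑_{i<j} Rᵢⱼ wᵢ wⱼ)`. Both `𝓗_m(e^{izX})`, up to a Gaussian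
factor in `z`, and `X^{⋄m} + X^{⋄(m+1)}` are circle averages of Wick exponentials against a kernel
which selects Wick powers (order at least `m`, respectively `m` or `m + 1`). Expanding the
exponential thus turns both expectations into sums over multigraphs `n`, weighted by `∏ₑ Rₑ ^ nₑ`:
all degrees are at least `m` on one side, and equal to `m` or `m + 1` on the other, where all terms
are nonnegative.

By Cauchy's formula, `∂_θ^r` only costs an average over complex frequencies `zⱼ` within distance `1`
of `θ`. There `Re (z_a z_b) ≥ -2`, so the exponent `-Rₑ z_a z_b` of each edge has bounded real part,
and by Taylor's formula all the multiplicities `≥ m` of that edge together contribute no more than a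
constant times `|Rₑ z_a z_b| ^ m`; the powers of the frequencies are absorbed by their Gaussian
factors. This leaves the finitely many multigraphs with multiplicities at most `m` and degrees at
least `m`.

Finally, since `R v a * R v b ≤ C * R a b`, two edges at a vertex of degree at least `m + 2` may be
contracted into one (or, if they are parallel, one of them deleted), until all degrees are `m` or
`m + 1`. -/

/-- The edges of the complete graph on `V`: unordered pairs of distinct vertices. A multigraph on
`V` is encoded by its edge multiplicities `n : Edge V → ℕ`. -/
abbrev Edge (V : Type*) := {e : Sym2 V // ¬e.IsDiag}

lemma Edge.exists_eq_mk {V : Type*} {e : Edge V} {v : V} (hv : v ∈ (e : Sym2 V)) :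
    ∃ a, ∃ h : v ≠ a, e = ⟨s(v, a), h⟩ := by
  obtain ⟨a, ha⟩ := hv
  exact ⟨a, fun h => e.2 (by simp [ha, h]), Subtype.ext ha⟩

section Multigraph

variable {V : Type*} [DecidableEq V]

lemma exists_eq_single_add {n : Edge V → ℕ} {e : Edge V} (he : n e ≠ 0) :
    ∃ n' : Edge V → ℕ, n = Pi.single e 1 + n' := by
  refine ⟨n - Pi.single e 1, (add_tsub_cancel_of_le fun f => ?_).symm⟩
  obtain rfl | hf := eq_or_ne f e
  · simpa using Nat.one_le_iff_ne_zero.2 he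
  · simp [hf]

lemma prod_toFinset_mk {M : Type*} [CommMonoid M] {a b : V} (hab : a ≠ b) (w : V → M) :
    ∏ j ∈ s(a, b).toFinset, w j = w a * w b := by
  rw [Sym2.toFinset_mk_eq, Finset.prod_pair hab]

variable [Fintype V]

lemma prod_pow_single_add {M : Type*} [CommMonoid M] (W : Edge V → M) (e : Edge V)
    (n : Edge V → ℕ) : ∏ f, W f ^ (Pi.single e 1 + n : Edge V → ℕ) f = W e * ∏ f, W f ^ n f := by
  simp_rw [Pi.add_apply, pow_add, Finset.prod_mul_distrib]
  simp [Pi.single_apply]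

/-- The degree of the vertex `j` in the multigraph with edge multiplicities `n`. -/
def degree (n : Edge V → ℕ) (j : V) : ℕ := ∑ e : Edge V, if j ∈ (e : Sym2 V) then n e else 0

lemma degree_add (n n' : Edge V → ℕ) (j : V) : degree (n + n') j = degree n j + degree n' j := by
  simp only [degree, ← Finset.sum_add_distrib, ite_add_ite, add_zero, Pi.add_apply]

lemma degree_single (e : Edge V) (j : V) :
    degree (Pi.single e 1) j = if j ∈ (e : Sym2 V) then 1 else 0 := by
  rw [degree, Finset.sum_eq_single_of_mem e (Finset.mem_univ e) (by simp +contextual),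
    Pi.single_eq_same]

lemma le_degree (n : Edge V → ℕ) {e : Edge V} {j : V} (hj : j ∈ (e : Sym2 V)) :
    n e ≤ degree n j := by
  simpa [hj, degree] using Finset.single_le_sum
    (f := fun e : Edge V => if j ∈ (e : Sym2 V) then n e else 0) (by simp) (Finset.mem_univ e)

lemma degree_le_card_mul {n : Edge V → ℕ} {m : ℕ} (hn : ∀ e, n e ≤ m) (j : V) :
    degree n j ≤ Fintype.card (Edge V) * m := by
  rw [degree, ← Finset.card_univ, ← smul_eq_mul]
  refine Finset.sum_le_card_nsmul _ _ m fun e _ => ?_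
  split_ifs <;> simp [hn]

lemma prod_pow_degree {M : Type*} [CommMonoid M] (w : V → M) (n : Edge V → ℕ) :
    ∏ j, w j ^ degree n j = ∏ e : Edge V, (∏ j ∈ (e : Sym2 V).toFinset, w j) ^ n e := by
  simp_rw [degree, ← Finset.prod_pow_eq_pow_sum, ← Finset.prod_pow]
  rw [Finset.prod_comm]
  refine Finset.prod_congr rfl fun e _ => ?_
  simp [pow_ite, ← Sym2.mem_toFinset]

lemma le_degree_min_iff {n : Edge V → ℕ} {m : ℕ} {j : V} :
    m ≤ degree (fun e => min (n e) m) j ↔ m ≤ degree n j := by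
  refine ⟨fun h => h.trans ?_, fun h => ?_⟩
  · exact Finset.sum_le_sum fun e _ => by split_ifs <;> simp
  by_cases hbig : ∃ e : Edge V, j ∈ (e : Sym2 V) ∧ m ≤ n e
  · obtain ⟨e, hj, he⟩ := hbig
    simpa [he] using le_degree (fun e => min (n e) m) hj
  · push Not at hbig
    refine h.trans_eq (Finset.sum_congr rfl fun e _ => ite_congr rfl (fun he => ?_) fun _ => rfl)
    exact (min_eq_left (hbig e he).le).symm

/-- The multigraphs with minimal degree at least `m` and multiplicities at most `m`. -/
def truncatedGraphs (V : Type*) [Fintype V] [DecidableEq V] (m : ℕ) : Finset (Edge V → ℕ) :=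
  {n ∈ Finset.Iic fun _ => m | ∀ j, m ≤ degree n j}

lemma mem_truncatedGraphs {m : ℕ} {n : Edge V → ℕ} :
    n ∈ truncatedGraphs V m ↔ (∀ e, n e ≤ m) ∧ ∀ j, m ≤ degree n j := by
  simp [truncatedGraphs, Pi.le_def]

end Multigraph

/-- The structural bounds satisfied by the covariances of a field at finitely many points, seen as
a function `R` on unordered pairs of points; they are all that is used of the standing covariance
bound. -/
structure IsAdmissible {V : Type*} (C : ℝ) (R : Sym2 V → ℝ) : Prop where
  one_le : 1 ≤ C
  nonneg (e : Sym2 V) : 0 ≤ R e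
  le (e : Sym2 V) : R e ≤ C
  inv_le_diag (j : V) : C⁻¹ ≤ R s(j, j)
  mul_le (v a b : V) : R s(v, a) * R s(v, b) ≤ C * R s(a, b)

namespace IsAdmissible

variable {V : Type*} [Fintype V] [DecidableEq V] {C : ℝ} {R : Sym2 V → ℝ} {m : ℕ}

lemma prod_pow_nonneg (hR : IsAdmissible C R) (n : Edge V → ℕ) : 0 ≤ ∏ e : Edge V, R e ^ n e :=
  Finset.prod_nonneg fun e _ => pow_nonneg (hR.nonneg e) _

lemma exists_contract_edges (hR : IsAdmissible C R) {n : Edge V → ℕ} (hn : ∀ j, m ≤ degree n j)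
    {v a b : V} (hva : v ≠ a) (hvb : v ≠ b) (hab : a ≠ b) (ha : n ⟨s(v, a), hva⟩ ≠ 0)
    (hb : n ⟨s(v, b), hvb⟩ ≠ 0) (hv : m + 2 ≤ degree n v) :
    ∃ n' : Edge V → ℕ, ∑ e, n' e < ∑ e, n e ∧ (∀ j, m ≤ degree n' j) ∧
      ∏ e : Edge V, R e ^ n e ≤ C * ∏ e : Edge V, R e ^ n' e := by
  obtain ⟨n₁, rfl⟩ := exists_eq_single_add ha
  have hb' : n₁ ⟨s(v, b), hvb⟩ ≠ 0 := by
    rwa [Pi.add_apply, Pi.single_eq_of_ne, zero_add] at hb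
    exact fun h => hab.symm (Sym2.congr_right.1 (congrArg Subtype.val h))
  obtain ⟨n₂, rfl⟩ := exists_eq_single_add hb'
  refine ⟨Pi.single ⟨s(a, b), hab⟩ 1 + n₂, ?_, fun j => ?_, ?_⟩
  · simp only [Pi.add_apply, Finset.sum_add_distrib, Finset.sum_pi_single', Finset.mem_univ,
      if_true]
    lia
  · have hj := hn j
    simp only [degree_add, degree_single, Sym2.mem_iff] at hj hv ⊢
    grind
  · simp only [prod_pow_single_add, ← mul_assoc]
    exact mul_le_mul_of_nonneg_right (hR.mul_le v a b) (hR.prod_pow_nonneg n₂)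

lemma exists_delete_edge (hR : IsAdmissible C R) {n : Edge V → ℕ} (hn : ∀ j, m ≤ degree n j)
    {v : V} {e : Edge V} (hve : v ∈ (e : Sym2 V))
    (he : ∀ f : Edge V, v ∈ (f : Sym2 V) → n f ≠ 0 → f = e) (hv : m + 2 ≤ degree n v) :
    ∃ n' : Edge V → ℕ, ∑ f, n' f < ∑ f, n f ∧ (∀ j, m ≤ degree n' j) ∧
      ∏ f : Edge V, R f ^ n f ≤ C * ∏ f : Edge V, R f ^ n' f := by
  have hdeg : degree n v = n e := by
    rw [degree, Finset.sum_eq_single_of_mem e (Finset.mem_univ e) (by grind), if_pos hve]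
  have hends : ∀ j ∈ (e : Sym2 V), m + 2 ≤ degree n j := fun j hj =>
    (hv.trans_eq hdeg).trans (le_degree n hj)
  obtain ⟨n', rfl⟩ := exists_eq_single_add (n := n) (e := e) (by lia)
  refine ⟨n', ?_, fun j => ?_, ?_⟩
  · simp [Finset.sum_add_distrib]
  · have hj := hn j
    have hj' := hends j
    rw [degree_add, degree_single] at hj hj'
    split_ifs at hj hj' with hje
    · linarith [hj' hje]
    · linarith
  · rw [prod_pow_single_add]
    exact mul_le_mul_of_nonneg_right (hR.le e) (hR.prod_pow_nonneg n')

lemma exists_sum_lt_of_lt_degree (hR : IsAdmissible C R) {n : Edge V → ℕ}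
    (hn : ∀ j, m ≤ degree n j) {v : V} (hv : m + 2 ≤ degree n v) :
    ∃ n' : Edge V → ℕ, ∑ e, n' e < ∑ e, n e ∧ (∀ j, m ≤ degree n' j) ∧
      ∏ e : Edge V, R e ^ n e ≤ C * ∏ e : Edge V, R e ^ n' e := by
  obtain ⟨e, he⟩ : ∃ e : Edge V, v ∈ (e : Sym2 V) ∧ n e ≠ 0 := by
    by_contra! h
    have : degree n v = 0 := Finset.sum_eq_zero (by grind)
    lia
  by_cases h : ∀ f : Edge V, v ∈ (f : Sym2 V) → n f ≠ 0 → f = e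
  · exact hR.exists_delete_edge hn he.1 h hv
  · push Not at h
    obtain ⟨f, hvf, hf, hfe⟩ := h
    obtain ⟨a, hva, rfl⟩ := Edge.exists_eq_mk he.1
    obtain ⟨b, hvb, rfl⟩ := Edge.exists_eq_mk hvf
    exact hR.exists_contract_edges hn hva hvb (by rintro rfl; exact hfe rfl) he.2 hf hv

lemma exists_degree_le_succ (hR : IsAdmissible C R) {n : Edge V → ℕ} (hn : ∀ j, m ≤ degree n j) :
    ∃ k : Edge V → ℕ, (∀ j, m ≤ degree k j ∧ degree k j ≤ m + 1) ∧
      ∏ e : Edge V, R e ^ n e ≤ C ^ (∑ e, n e) * ∏ e : Edge V, R e ^ k e := by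
  induction hN : ∑ e, n e using Nat.strong_induction_on generalizing n with
  | _ N ih =>
  by_cases h : ∀ j, degree n j ≤ m + 1
  · exact ⟨n, fun j => ⟨hn j, h j⟩,
      le_mul_of_one_le_left (hR.prod_pow_nonneg n) (one_le_pow₀ hR.one_le)⟩
  push Not at h
  obtain ⟨v, hv⟩ := h
  obtain ⟨n', hlt, hn', hle⟩ := hR.exists_sum_lt_of_lt_degree hn hv
  obtain ⟨k, hk, hk'⟩ := ih _ (hlt.trans_eq hN) hn' rfl
  refine ⟨k, hk, hle.trans ?_⟩
  have hC : 0 ≤ C := zero_le_one.trans hR.one_le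
  calc C * ∏ e : Edge V, R e ^ n' e
      ≤ C * (C ^ (∑ e, n' e) * ∏ e : Edge V, R e ^ k e) := by gcongr
    _ = C ^ (∑ e, n' e + 1) * ∏ e : Edge V, R e ^ k e := by ring
    _ ≤ C ^ N * ∏ e : Edge V, R e ^ k e := by
        gcongr
        · exact hR.prod_pow_nonneg k
        · exact hR.one_le
        · lia

end IsAdmissible

section Gaussian

variable {Ω : Type*} [MeasurableSpace Ω] {P : Measure Ω}

lemma integral_sq_of_hasLaw_gaussianReal {Y : Ω → ℝ} {v : NNReal}
    (hY : HasLaw Y (gaussianReal 0 v) P) : ∫ ω, Y ω ^ 2 ∂P = v := by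
  have hmean : ∫ ω, Y ω ∂P = 0 := by rw [hY.integral_eq, integral_id_gaussianReal]
  rw [← variance_id_gaussianReal (μ := 0) (v := v), ← hY.variance_eq,
    variance_of_integral_eq_zero hY.aemeasurable hmean]

lemma integral_exp_of_hasLaw_gaussianReal {Y : Ω → ℝ} {v : NNReal}
    (hY : HasLaw Y (gaussianReal 0 v) P) :
    ∫ ω, Real.exp (Y ω) ∂P = Real.exp ((∫ ω, Y ω ^ 2 ∂P) / 2) := by
  simpa [mgf, integral_sq_of_hasLaw_gaussianReal hY] using mgf_gaussianReal hY.map_eq 1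

lemma integrable_exp_of_hasLaw_gaussianReal {Y : Ω → ℝ} {v : NNReal}
    (hY : HasLaw Y (gaussianReal 0 v) P) : Integrable (fun ω => Real.exp (Y ω)) P := by
  have h := integrable_exp_mul_gaussianReal (μ := 0) (v := v) 1
  rw [← hY.map_eq] at h
  simpa [Function.comp_def] using h.comp_aemeasurable hY.aemeasurable

lemma integral_sq_sum_mul {𝕜 V : Type*} [RCLike 𝕜] [Fintype V] {X : V → Ω → ℝ}
    (hX : ∀ j, MemLp (X j) 2 P) (w : V → 𝕜) :
    ∫ ω, (∑ j, w j * (X j ω : 𝕜)) ^ 2 ∂P =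
      ∑ i, ∑ j, w i * w j * ((∫ ω, X i ω * X j ω ∂P : ℝ) : 𝕜) := by
  have hint (i j : V) : Integrable (fun ω => w i * w j * ((X i ω * X j ω : ℝ) : 𝕜)) P :=
    ((hX i).integrable_mul (hX j)).ofReal.const_mul _
  have hexpand (ω : Ω) : (∑ j, w j * (X j ω : 𝕜)) ^ 2 =
      ∑ i, ∑ j, w i * w j * ((X i ω * X j ω : ℝ) : 𝕜) := by
    simp only [sq, Finset.sum_mul_sum, RCLike.ofReal_mul, mul_mul_mul_comm]
  simp_rw [hexpand]
  rw [integral_finsetSum _ fun i _ => integrable_finsetSum _ fun j _ => hint i j]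
  simp_rw [integral_finsetSum _ fun j _ => hint _ j, integral_const_mul, integral_ofReal]

lemma integral_add_mul_sq {𝕜 : Type*} [RCLike 𝕜] {Y Z : Ω → ℝ} (hY : MemLp Y 2 P)
    (hZ : MemLp Z 2 P) (z : 𝕜) :
    ∫ ω, ((Y ω : 𝕜) + z * (Z ω : 𝕜)) ^ 2 ∂P =
      ((∫ ω, Y ω ^ 2 ∂P : ℝ) : 𝕜) + 2 * z * ((∫ ω, Y ω * Z ω ∂P : ℝ) : 𝕜) +
        z ^ 2 * ((∫ ω, Z ω ^ 2 ∂P : ℝ) : 𝕜) := by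
  have hL : ∀ j, MemLp (![Y, Z] j) 2 P := by simp [Fin.forall_fin_two, hY, hZ]
  have h := integral_sq_sum_mul hL ![(1 : 𝕜), z]
  simp only [Fin.sum_univ_two, Matrix.cons_val_zero, Matrix.cons_val_one, one_mul, mul_one,
    mul_comm (Z _) (Y _), ← sq] at h
  rw [h]
  ring

section PairOfGaussians

variable {Y Z : Ω → ℝ}

lemma mgf_tilted_eq_mgf_gaussianReal
    (h : ∀ a b : ℝ, ∃ v, HasLaw (fun ω => a * Y ω + b * Z ω) (gaussianReal 0 v) P)
    {v : NNReal} (hZ : HasLaw Z (gaussianReal 0 v) P) :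
    mgf Z (P.tilted Y) = mgf id (gaussianReal (∫ ω, Y ω * Z ω ∂P) v) := by
  ext t
  obtain ⟨u, hY⟩ : ∃ u, HasLaw Y (gaussianReal 0 u) P := by simpa using h 1 0
  obtain ⟨u', hYZ⟩ : ∃ u', HasLaw (fun ω => Y ω + t * Z ω) (gaussianReal 0 u') P := by
    simpa using h 1 t
  have hsq := integral_add_mul_sq hY.hasGaussianLaw.memLp_two hZ.hasGaussianLaw.memLp_two t
  simp only [RCLike.ofReal_real_eq_id, id_eq] at hsq
  rw [mgf_id_gaussianReal, mgf, integral_tilted]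
  simp_rw [smul_eq_mul, div_mul_eq_mul_div, ← Real.exp_add, mul_comm t]
  rw [integral_div]
  simp_rw [mul_comm _ t]
  rw [integral_exp_of_hasLaw_gaussianReal hYZ, integral_exp_of_hasLaw_gaussianReal hY, hsq,
    ← Real.exp_sub, integral_sq_of_hasLaw_gaussianReal hZ]
  ring_nf

-- Under the measure tilted by `Y`, the variable `Z` has the moment generating function of a real
-- Gaussian, which extends analytically to complex arguments.
lemma integral_cexp_add_mul
    (h : ∀ a b : ℝ, ∃ v, HasLaw (fun ω => a * Y ω + b * Z ω) (gaussianReal 0 v) P) (z : ℂ) :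
    ∫ ω, Complex.exp (Y ω + z * Z ω) ∂P =
      Complex.exp ((∫ ω, ((Y ω : ℂ) + z * Z ω) ^ 2 ∂P) / 2) := by
  obtain ⟨u, hY⟩ : ∃ u, HasLaw Y (gaussianReal 0 u) P := by simpa using h 1 0
  obtain ⟨v, hZ⟩ : ∃ v, HasLaw Z (gaussianReal 0 v) P := by simpa using h 0 1
  have : IsProbabilityMeasure P := hY.isProbabilityMeasure
  have : IsProbabilityMeasure (P.tilted Y) :=
    isProbabilityMeasure_tilted (integrable_exp_of_hasLaw_gaussianReal hY)
  have hmgf := mgf_tilted_eq_mgf_gaussianReal h hZ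
  have hset : integrableExpSet Z (P.tilted Y) = Set.univ := by
    rw [integrableExpSet_eq_of_mgf hmgf, integrableExpSet_id_gaussianReal]
  have hcmgf := eqOn_complexMGF_of_mgf hmgf (x := z) (by simp [hset])
  rw [complexMGF_id_gaussianReal, complexMGF, integral_tilted] at hcmgf
  simp_rw [Complex.real_smul, Complex.ofReal_div, Complex.ofReal_exp, div_mul_eq_mul_div,
    ← Complex.exp_add] at hcmgf
  rw [integral_div, integral_exp_of_hasLaw_gaussianReal hY, div_eq_iff (by simp),
    Complex.ofReal_exp, ← Complex.exp_add] at hcmgf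
  have hsq := integral_add_mul_sq hY.hasGaussianLaw.memLp_two hZ.hasGaussianLaw.memLp_two z
  simp only [RCLike.ofReal_eq_complex_ofReal] at hsq
  rw [hcmgf, hsq, integral_sq_of_hasLaw_gaussianReal hZ]
  push_cast
  ring_nf

end PairOfGaussians

namespace IsCenteredGaussianFamily

section ArbitraryIndex

variable {ι : Type*} {X : ι → Ω → ℝ}

lemma comp {κ : Type*} (hX : IsCenteredGaussianFamily P X) (x : κ → ι) :
    IsCenteredGaussianFamily P fun j => X (x j) := by
  classical
  intro A c
  obtain ⟨v, hv⟩ := hX (A.image x) fun i => ∑ j ∈ A with x j = i, c j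
  refine ⟨v, hv ▸ congrArg P.map (funext fun ω => ?_)⟩
  rw [← Finset.sum_fiberwise_of_maps_to fun j hj => Finset.mem_image_of_mem x hj]
  refine Finset.sum_congr rfl fun i _ => ?_
  rw [Finset.sum_mul]
  exact Finset.sum_congr rfl fun j hj => by simp only [(Finset.mem_filter.1 hj).2]

lemma exists_hasLaw_sum (hX : IsCenteredGaussianFamily P X) (A : Finset ι) (c : ι → ℝ) :
    ∃ v, HasLaw (fun ω => ∑ i ∈ A, c i * X i ω) (gaussianReal 0 v) P := by
  obtain ⟨v, hv⟩ := hX A c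
  have : NeZero (P.map fun ω => ∑ i ∈ A, c i * X i ω) := by rw [hv]; infer_instance
  exact ⟨v, aemeasurable_of_map_neZero this, hv⟩

lemma hasGaussianLaw (hX : IsCenteredGaussianFamily P X) (i : ι) : HasGaussianLaw (X i) P := by
  obtain ⟨v, hv⟩ := hX.exists_hasLaw_sum {i} 1
  simpa using hv.hasGaussianLaw

lemma isProbabilityMeasure (hX : IsCenteredGaussianFamily P X) : IsProbabilityMeasure P :=
  (hX.exists_hasLaw_sum ∅ 0).choose_spec.isProbabilityMeasure

end ArbitraryIndex

variable {V : Type*} [Fintype V] {X : V → Ω → ℝ}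

lemma integral_cexp_sum (hX : IsCenteredGaussianFamily P X) (w : V → ℂ) :
    ∫ ω, Complex.exp (∑ j, w j * X j ω) ∂P =
      Complex.exp ((∑ i, ∑ j, w i * w j * ((∫ ω, X i ω * X j ω ∂P : ℝ) : ℂ)) / 2) := by
  have hlaw (a b : ℝ) : ∃ v, HasLaw (fun ω => a * (∑ j, (w j).re * X j ω) +
      b * ∑ j, (w j).im * X j ω) (gaussianReal 0 v) P := by
    convert hX.exists_hasLaw_sum Finset.univ fun j => a * (w j).re + b * (w j).im using 4 with v ω
    simp only [Finset.mul_sum, ← Finset.sum_add_distrib, add_mul, mul_assoc]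
  have hsum (ω : Ω) : ∑ j, w j * (X j ω : ℂ) = ((∑ j, (w j).re * X j ω : ℝ) : ℂ) +
      Complex.I * ((∑ j, (w j).im * X j ω : ℝ) : ℂ) := by
    push_cast
    rw [Finset.mul_sum, ← Finset.sum_add_distrib]
    refine Finset.sum_congr rfl fun j _ => ?_
    conv_lhs => rw [← Complex.re_add_im (w j)]
    ring
  have h := integral_sq_sum_mul (fun j => (hX.hasGaussianLaw j).memLp_two) w
  simp only [RCLike.ofReal_eq_complex_ofReal, hsum] at h
  rw [← h, ← integral_cexp_add_mul hlaw Complex.I]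
  simp only [hsum]

lemma integrable_exp_sum_abs (hX : IsCenteredGaussianFamily P X) (M : ℝ) :
    Integrable (fun ω => Real.exp (∑ j, M * |X j ω|)) P := by
  classical
  have hint (t : Finset V) :
      Integrable (fun ω => Real.exp (∑ j, (if j ∈ t then M else -M) * X j ω)) P :=
    integrable_exp_of_hasLaw_gaussianReal (hX.exists_hasLaw_sum Finset.univ _).choose_spec
  have hmeas (j : V) : AEMeasurable (X j) P := (hX.hasGaussianLaw j).aemeasurable
  refine (integrable_finsetSum Finset.univ fun t _ => hint t).mono' (by fun_prop)
    (.of_forall fun ω => ?_)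
  have hsign (j : V) : M * |X j ω| =
      (if j ∈ ({j | 0 ≤ X j ω} : Finset V) then M else -M) * X j ω := by
    by_cases h : 0 ≤ X j ω
    · simp [h, abs_of_nonneg]
    · simp [h, abs_of_neg (not_le.1 h)]
  simp_rw [Real.norm_eq_abs, Real.abs_exp, hsign]
  exact Finset.single_le_sum (f := fun t : Finset V =>
    Real.exp (∑ j, (if j ∈ t then M else -M) * X j ω)) (fun t _ => (Real.exp_pos _).le)
    (Finset.mem_univ _)

end IsCenteredGaussianFamily

end Gaussian

section CircleAverages

/-- The uniform probability measure on `(0, 2π]`, used to write averages over circles as integrals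
against a measure. -/
def circleMeasure : Measure ℝ := volume[|Set.Ioc 0 (2 * Real.pi)]

instance : IsProbabilityMeasure circleMeasure :=
  cond_isProbabilityMeasure_of_finite (by simp [Real.pi_pos]) measure_Ioc_lt_top.ne

lemma integral_circleMeasure (f : ℂ → ℂ) (c : ℂ) (R : ℝ) :
    ∫ φ, f (circleMap c R φ) ∂circleMeasure = Real.circleAverage f c R := by
  rw [circleMeasure, ProbabilityTheory.cond, integral_smul_measure, Real.circleAverage,
    intervalIntegral.integral_of_le Real.two_pi_pos.le]
  simp [Real.pi_pos.le]

lemma circleAverage_inv_pow_mul {F : ℂ → ℂ} {c : ℂ} {R : ℝ} (hR : 0 < R)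
    (hF : DiffContOnCl ℂ F (Metric.ball c R)) (n : ℕ) :
    Real.circleAverage (fun z => ((z - c) ^ n)⁻¹ * F z) c R =
      iteratedDeriv n F c / n.factorial := by
  have h := hF.circleIntegral_one_div_sub_center_pow_smul hR n
  simp_rw [one_div, pow_succ', mul_inv, smul_eq_mul, mul_assoc] at h
  simp_rw [Real.circleAverage_eq_circleIntegral hR.ne', smul_eq_mul, h]
  have := Complex.two_pi_I_ne_zero
  field_simp

/-- The kernel which, integrated over the circle of radius `2`, evaluates an entire function at `1`
after removing the terms of degree `< m` from its Taylor expansion at `0`. -/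
def truncKernel (m : ℕ) (z : ℂ) : ℂ := z / (z - 1) - ∑ n ∈ Finset.range m, (z ^ n)⁻¹

lemma measurable_truncKernel (m : ℕ) : Measurable (truncKernel m) := by
  unfold truncKernel
  fun_prop

lemma norm_truncKernel_le (m : ℕ) {z : ℂ} (hz : ‖z‖ = 2) : ‖truncKernel m z‖ ≤ 2 + m := by
  have hz_sub : 1 ≤ ‖z - 1‖ := by
    have := norm_sub_norm_le z 1
    rw [hz, norm_one] at this
    linarith
  refine (norm_sub_le _ _).trans (add_le_add ?_ ?_)
  · rw [norm_div, hz]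
    exact div_le_self zero_le_two hz_sub
  · refine (norm_sum_le_of_le _ (n := fun _ => (1 : ℝ)) fun _ _ => ?_).trans_eq (by simp)
    rw [norm_inv, norm_pow, hz]
    exact inv_le_one_of_one_le₀ (one_le_pow₀ one_le_two)

lemma circleAverage_truncKernel_mul {F : ℂ → ℂ} (hF : Differentiable ℂ F) (m : ℕ) :
    Real.circleAverage (fun z => truncKernel m z * F z) 0 2 =
      F 1 - ∑ n ∈ Finset.range m, iteratedDeriv n F 0 / n.factorial := by
  have hsphere : ∀ z ∈ Metric.sphere (0 : ℂ) |2|, z ≠ 0 ∧ z - 1 ≠ 0 := by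
    intro z hz
    constructor <;> rintro h
    · simp [h] at hz
    · simp [sub_eq_zero.1 h] at hz
  have hFc := hF.continuous
  have hpow (n : ℕ) : CircleIntegrable (fun z => (z ^ n)⁻¹ * F z) 0 2 :=
    ContinuousOn.circleIntegrable' <| by fun_prop (disch := grind [pow_ne_zero])
  have hdiv : CircleIntegrable (fun z => z / (z - 1) * F z) 0 2 :=
    ContinuousOn.circleIntegrable' <| by fun_prop (disch := grind [pow_ne_zero])
  simp_rw [truncKernel, sub_mul, Finset.sum_mul]
  rw [Real.circleAverage_fun_sub hdiv (CircleIntegrable.fun_sum _ fun n _ => hpow n),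
    Real.circleAverage_fun_sum fun n _ => hpow n]
  congr 1
  · simpa using hF.diffContOnCl.circleAverage_smul_div (c := 0) (R := 2) (w := 1) (by simp)
  · refine Finset.sum_congr rfl fun n _ => ?_
    simpa using circleAverage_inv_pow_mul two_pos (hF.diffContOnCl (s := Metric.ball 0 2)) n

lemma circleAverage_truncKernel_mul_pow (m k : ℕ) :
    Real.circleAverage (fun z => truncKernel m z * z ^ k) 0 2 = if m ≤ k then 1 else 0 := by
  rw [circleAverage_truncKernel_mul (F := fun z => z ^ k) (by fun_prop)]
  have hterm (n : ℕ) : iteratedDeriv n (fun z : ℂ => z ^ k) 0 / n.factorial =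
      if n = k then 1 else 0 := by
    rw [iteratedDeriv_fun_pow_zero]
    obtain rfl | h := eq_or_ne n k <;> simp [*, Nat.factorial_ne_zero]
  simp only [hterm, Finset.sum_ite_eq', Finset.mem_range, one_pow]
  grind

/-- The kernel which, integrated over the unit circle against an entire function, gives the sum of
its derivatives of orders `m` and `m + 1` at `0`. -/
def wickKernel (m : ℕ) (z : ℂ) : ℂ :=
  m.factorial * (z ^ m)⁻¹ + (m + 1).factorial * (z ^ (m + 1))⁻¹

lemma measurable_wickKernel (m : ℕ) : Measurable (wickKernel m) := by
  unfold wickKernel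
  fun_prop

lemma norm_wickKernel_le (m : ℕ) {z : ℂ} (hz : ‖z‖ = 1) :
    ‖wickKernel m z‖ ≤ m.factorial + (m + 1).factorial := by
  refine (norm_add_le _ _).trans_eq ?_
  simp [hz]

lemma circleAverage_wickKernel_mul {F : ℂ → ℂ} (hF : Differentiable ℂ F) (m : ℕ) :
    Real.circleAverage (fun z => wickKernel m z * F z) 0 1 =
      iteratedDeriv m F 0 + iteratedDeriv (m + 1) F 0 := by
  have hFc := hF.continuous
  have hne : ∀ z ∈ Metric.sphere (0 : ℂ) |1|, z ≠ 0 := by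
    rintro z hz rfl
    simp at hz
  have hint (n : ℕ) : CircleIntegrable (fun z => n.factorial * (z ^ n)⁻¹ * F z) 0 1 :=
    ContinuousOn.circleIntegrable' <| by fun_prop (disch := grind [pow_ne_zero])
  have hterm (n : ℕ) : Real.circleAverage (fun z => n.factorial * (z ^ n)⁻¹ * F z) 0 1 =
      iteratedDeriv n F 0 := by
    have h := circleAverage_inv_pow_mul one_pos (hF.diffContOnCl (s := Metric.ball 0 1)) n
    simp only [sub_zero] at h
    simp_rw [mul_assoc, ← smul_eq_mul (n.factorial : ℂ), Real.circleAverage_fun_smul, h,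
      smul_eq_mul, mul_div_cancel₀ _ (Nat.cast_ne_zero.2 n.factorial_ne_zero : (_ : ℂ) ≠ 0)]
  simp_rw [wickKernel, add_mul]
  rw [Real.circleAverage_fun_add (hint m) (hint (m + 1)), hterm, hterm]

/-- The expected value of `wickKernel m z * z ^ k` on the unit circle. -/
def wickCoeff (m k : ℕ) : ℕ := if m ≤ k ∧ k ≤ m + 1 then k.factorial else 0

lemma circleAverage_wickKernel_mul_pow (m k : ℕ) :
    Real.circleAverage (fun z => wickKernel m z * z ^ k) 0 1 = wickCoeff m k := by
  rw [circleAverage_wickKernel_mul (F := fun z => z ^ k) (by fun_prop),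
    iteratedDeriv_fun_pow_zero, iteratedDeriv_fun_pow_zero, wickCoeff, ← Nat.cast_add]
  exact congrArg Nat.cast (by grind)

lemma wickCoeff_pos {m k : ℕ} (hk : m ≤ k ∧ k ≤ m + 1) : 0 < wickCoeff m k := by
  rw [wickCoeff, if_pos hk]
  exact k.factorial_pos

end CircleAverages

section WickPowers

/-- The Wick exponential `e^{wx - w²a/2}`, the generating function in `w` of the Wick powers
`x^{⋄n} / n!` for the variance `a`. -/
def wickExp (a x : ℝ) (w : ℂ) : ℂ := Complex.exp (w * x - w ^ 2 * a / 2)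

lemma hasDerivAt_wickExp (a x : ℝ) (w : ℂ) :
    HasDerivAt (wickExp a x) (wickExp a x w * (x - a * w)) w := by
  have h := (((hasDerivAt_id w).mul_const (x : ℂ)).sub
    ((((hasDerivAt_id w).pow 2).mul_const (a : ℂ)).div_const 2)).cexp
  refine h.congr_deriv ?_
  simp only [id, Pi.sub_apply, Pi.pow_apply, wickExp]
  ring

lemma differentiable_wickExp (a x : ℝ) : Differentiable ℂ (wickExp a x) := fun w =>
  (hasDerivAt_wickExp a x w).differentiableAt

lemma iteratedDeriv_wickExp {a : ℝ} (ha : 0 < a) (x : ℝ) (n : ℕ) :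
    iteratedDeriv n (wickExp a x) = fun w => (Real.sqrt a : ℂ) ^ n *
      Polynomial.aeval ((x - a * w) / (Real.sqrt a : ℂ)) (Polynomial.hermite n) *
        wickExp a x w := by
  have hs : (Real.sqrt a : ℂ) ≠ 0 := mod_cast (Real.sqrt_pos.2 ha).ne'
  have hsq : (Real.sqrt a : ℂ) ^ 2 = a := mod_cast Real.sq_sqrt ha.le
  induction n with
  | zero => simp
  | succ n ih =>
    ext w
    have hlin : HasDerivAt (fun w : ℂ => ((x : ℂ) - a * w) / (Real.sqrt a : ℂ))
        (-a / Real.sqrt a) w := by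
      simpa using (((hasDerivAt_id w).const_mul (a : ℂ)).const_sub (x : ℂ)).div_const _
    have hherm := (((Polynomial.hermite n).hasDerivAt_aeval _).comp w hlin).const_mul
      ((Real.sqrt a : ℂ) ^ n)
    have h := (hherm.mul (hasDerivAt_wickExp a x w)).deriv
    rw [iteratedDeriv_succ, ih]
    refine h.trans ?_
    rw [Polynomial.hermite_succ, map_sub, map_mul, Polynomial.aeval_X, ← hsq]
    simp only [Function.comp_apply]
    field_simp
    ring

lemma iteratedDeriv_wickExp_zero {a : ℝ} (ha : 0 < a) (x : ℝ) (n : ℕ) :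
    iteratedDeriv n (wickExp a x) 0 = wick a n x := by
  have hreal : Polynomial.aeval ((x : ℂ) / (Real.sqrt a : ℂ)) (Polynomial.hermite n) =
      (Polynomial.aeval (x / Real.sqrt a) (Polynomial.hermite n) : ℝ) := by
    rw [← Complex.ofReal_div]
    exact Polynomial.aeval_algebraMap_apply ℂ (x / Real.sqrt a) _
  simp [iteratedDeriv_wickExp ha, wickExp, wick, hreal]

lemma wick_add_wick_eq_circleAverage {a : ℝ} (ha : 0 < a) (x : ℝ) (m : ℕ) :
    ((wick a m x + wick a (m + 1) x : ℝ) : ℂ) =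
      Real.circleAverage (fun w => wickKernel m w * wickExp a x w) 0 1 := by
  rw [circleAverage_wickKernel_mul (differentiable_wickExp a x), iteratedDeriv_wickExp_zero ha,
    iteratedDeriv_wickExp_zero ha, Complex.ofReal_add]

lemma norm_wickExp_le {a b B : ℝ} (ha : |a| ≤ b) (x : ℝ) {w : ℂ} (hw : ‖w‖ ≤ B) :
    ‖wickExp a x w‖ ≤ Real.exp (B ^ 2 * b / 2) * Real.exp (B * |x|) := by
  rw [wickExp, Complex.norm_exp, ← Real.exp_add, Real.exp_le_exp]
  have : 0 ≤ B := (norm_nonneg w).trans hw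
  refine (Complex.re_le_norm _).trans ((norm_sub_le _ _).trans ?_)
  rw [add_comm]
  simp only [norm_div, norm_mul, norm_pow, Complex.norm_real, Complex.norm_ofNat, Real.norm_eq_abs]
  gcongr

/-- The function `hFun` at a complex frequency `z`. -/
def hFunC (m : ℕ) (z : ℂ) (x a : ℝ) : ℂ :=
  Complex.exp (Complex.I * z * x) -
    ∑ n ∈ Finset.range m, (Complex.I ^ n / (n.factorial : ℂ)) * z ^ n *
      Complex.exp (-(a * z ^ 2) / 2) * wick a n x

lemma hFun_eq_hFunC (m : ℕ) (t x a : ℝ) : hFun m t x a = hFunC m t x a := by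
  simp [hFun, hFunC]

lemma differentiable_hFunC (m : ℕ) (x a : ℝ) : Differentiable ℂ fun z => hFunC m z x a := by
  unfold hFunC
  fun_prop

lemma continuous_hFunC (m : ℕ) (a : ℝ) : Continuous fun p : ℂ × ℝ => hFunC m p.1 p.2 a := by
  unfold hFunC wick
  fun_prop

lemma hFunC_eq_circleAverage (m : ℕ) {a : ℝ} (ha : 0 < a) (z : ℂ) (x : ℝ) :
    hFunC m z x a = Complex.exp (-(a * z ^ 2) / 2) *
      Real.circleAverage (fun u => truncKernel m u * wickExp a x (Complex.I * z * u)) 0 2 := by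
  have hd : Differentiable ℂ fun u => wickExp a x (Complex.I * z * u) :=
    (differentiable_wickExp a x).comp (by fun_prop)
  have hexp : Complex.exp (Complex.I * z * x) =
      Complex.exp (-(a * z ^ 2) / 2) * wickExp a x (Complex.I * z * 1) := by
    rw [wickExp, ← Complex.exp_add]
    congr 1
    linear_combination (a * z ^ 2 / 2) * Complex.I_sq
  rw [circleAverage_truncKernel_mul hd, mul_sub, ← hexp, hFunC, Finset.mul_sum]
  congr 1
  refine Finset.sum_congr rfl fun n _ => ?_
  have hscale := congrFun (iteratedDeriv_comp_const_mul (n := n) (f := wickExp a x)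
    (differentiable_wickExp a x).contDiff (Complex.I * z)) 0
  rw [hscale, mul_zero, iteratedDeriv_wickExp_zero ha]
  ring

lemma norm_hFunC_le (m : ℕ) {a : ℝ} (ha : 0 < a) {z : ℂ} {B : ℝ} (hz : ‖z‖ ≤ B) (x : ℝ) :
    ‖hFunC m z x a‖ ≤ Real.exp (a * B ^ 2 / 2) *
      ((2 + m) * (Real.exp ((2 * B) ^ 2 * a / 2) * Real.exp (2 * B * |x|))) := by
  rw [hFunC_eq_circleAverage m ha, norm_mul, Complex.norm_exp]
  gcongr
  · refine (Complex.re_le_norm _).trans ?_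
    rw [norm_div, norm_neg, norm_mul, norm_pow, Complex.norm_real, Complex.norm_ofNat,
      Real.norm_of_nonneg ha.le]
    gcongr
  · rw [← integral_circleMeasure]
    refine (norm_integral_le_of_norm_le_const (.of_forall fun φ => ?_)).trans_eq (by simp; rfl)
    rw [norm_mul]
    gcongr
    · exact norm_truncKernel_le m (by simp)
    · refine norm_wickExp_le (abs_of_pos ha).le x ?_
      simpa [mul_comm] using hz

lemma iteratedDeriv_comp_ofReal {F : ℂ → ℂ} (hF : Differentiable ℂ F) (r : ℕ) :
    iteratedDeriv r (fun t : ℝ => F t) = fun t : ℝ => iteratedDeriv r F t := by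
  induction r with
  | zero => simp
  | succ r ih =>
    ext t
    have hd : Differentiable ℂ (iteratedDeriv r F) :=
      (hF.contDiff (n := (r + 1 : ℕ))).differentiable_iteratedDeriv r (mod_cast r.lt_succ_self)
    rw [iteratedDeriv_succ, ih, iteratedDeriv_succ]
    exact (hd t).hasDerivAt.comp_ofReal.deriv

lemma iteratedDeriv_hFun_eq_circleAverage (m r : ℕ) (θ x a : ℝ) :
    iteratedDeriv r (fun t => hFun m t x a) θ =
      r.factorial * Real.circleAverage (fun z => ((z - θ) ^ r)⁻¹ * hFunC m z x a) θ 1 := by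
  simp_rw [hFun_eq_hFunC, iteratedDeriv_comp_ofReal (differentiable_hFunC m x a)]
  rw [circleAverage_inv_pow_mul one_pos (differentiable_hFunC m x a).diffContOnCl,
    mul_div_cancel₀ _ (mod_cast r.factorial_ne_zero)]

end WickPowers

section Series

lemma pi_count_eq_count (ι : Type*) [Fintype ι] :
    Measure.pi (fun _ : ι => (Measure.count : Measure ℕ)) = Measure.count :=
  Measure.ext_of_singleton fun n => by simp [Measure.pi_singleton]

lemma summable_norm_prod {ι 𝕜 : Type*} [Fintype ι] [RCLike 𝕜] {f : ι → ℕ → 𝕜}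
    (hf : ∀ i, Summable fun k => ‖f i k‖) : Summable fun n : ι → ℕ => ‖∏ i, f i (n i)‖ := by
  have h := Integrable.fintype_prod fun i => integrable_count_iff.2 (hf i)
  rwa [pi_count_eq_count, integrable_count_iff] at h

lemma hasSum_prod {ι 𝕜 : Type*} [Fintype ι] [RCLike 𝕜] {f : ι → ℕ → 𝕜}
    (hf : ∀ i, Summable fun k => ‖f i k‖) :
    HasSum (fun n : ι → ℕ => ∏ i, f i (n i)) (∏ i, ∑' k, f i k) := by
  have h := integral_fintype_prod_eq_prod (μ := fun _ : ι => Measure.count) f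
  have hsum := summable_norm_prod hf
  rw [pi_count_eq_count, integral_countable (integrable_count_iff.2 hsum)] at h
  simp only [fun i => integral_countable (integrable_count_iff.2 (hf i)), measureReal_def,
    Measure.count_singleton, ENNReal.toReal_one, one_smul] at h
  exact h ▸ hsum.of_norm.hasSum

lemma hasSum_prod_pow_div_factorial {ι : Type*} [Fintype ι] (b : ι → ℂ) :
    HasSum (fun n : ι → ℕ => ∏ i, b i ^ n i / (n i).factorial) (Complex.exp (∑ i, b i)) := by
  have h := hasSum_prod fun i => NormedSpace.norm_expSeries_div_summable (b i)
  simp only [fun i => (NormedSpace.expSeries_div_hasSum_exp (b i)).tsum_eq,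
    ← Complex.exp_eq_exp_ℂ] at h
  rwa [Complex.exp_sum]

end Series

lemma sum_sum_sym2 {V M : Type*} [Fintype V] [DecidableEq V] [AddCommMonoid M] (f : Sym2 V → M) :
    ∑ i, ∑ j, f s(i, j) = ∑ i, f s(i, i) + 2 • ∑ e : Edge V, f e := by
  rw [← Fintype.sum_prod_type', ← Finset.univ_product_univ, ← Finset.diag_union_offDiag,
    Finset.sum_union (Finset.disjoint_diag_offDiag _), Finset.sum_diag]
  congr 1
  rw [← Finset.sum_subtype {e : Sym2 V | ¬e.IsDiag} (by simp) f, Finset.smul_sum,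
    ← Finset.sum_fiberwise_of_maps_to (g := fun p : V × V => s(p.1, p.2))
      (t := {e : Sym2 V | ¬e.IsDiag}) (by simp)]
  refine Finset.sum_congr rfl fun e he => ?_
  induction e with
  | _ a b =>
  have hab : a ≠ b := by simpa using he
  have hfiber : {p ∈ (Finset.univ : Finset V).offDiag | s(p.1, p.2) = s(a, b)} =
      {(a, b), (b, a)} := by
    ext ⟨i, j⟩
    simp only [Finset.mem_filter, Finset.mem_offDiag, Finset.mem_univ, Sym2.eq_iff,
      Finset.mem_insert, Finset.mem_singleton, Prod.mk.injEq]
    grind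
  rw [hfiber, Finset.sum_pair (by simp [hab]), Sym2.eq_swap, two_nsmul]

section Expansion

variable {Ω V T : Type*} [MeasurableSpace Ω] [MeasurableSpace T] [Fintype V] {P : Measure Ω}
  {X : V → Ω → ℝ}

lemma IsCenteredGaussianFamily.integral_prod_integral_comm (hX : IsCenteredGaussianFamily P X)
    (ν : Measure T) [IsFiniteMeasure ν] {f : V → T → ℝ → ℂ}
    (hf : ∀ j, Measurable fun p : T × ℝ => f j p.1 p.2) {A : V → ℝ} {M : ℝ}
    (hA : ∀ j t x, ‖f j t x‖ ≤ A j * Real.exp (M * |x|)) :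
    ∫ ω, ∏ j, ∫ t, f j t (X j ω) ∂ν ∂P =
      ∫ t : V → T, ∫ ω, ∏ j, f j (t j) (X j ω) ∂P ∂(Measure.pi fun _ => ν) := by
  have := hX.isProbabilityMeasure
  simp_rw [← fun ω => integral_fintype_prod_eq_prod (μ := fun _ : V => ν)
    fun j t => f j t (X j ω)]
  refine integral_integral_swap ?_
  have hdom := ((hX.integrable_exp_sum_abs M).const_mul (∏ j, A j)).comp_fst
    (Measure.pi fun _ : V => ν)
  refine hdom.mono' (Finset.aestronglyMeasurable_fun_prod _ fun j _ => ?_) (.of_forall ?_)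
  · have hXj : AEMeasurable (fun p : Ω × (V → T) => X j p.1)
        (P.prod (Measure.pi fun _ : V => ν)) := (hX.hasGaussianLaw j).aemeasurable.comp_fst
    have htj : Measurable fun p : Ω × (V → T) => p.2 j := by fun_prop
    exact ((hf j).comp_aemeasurable (htj.aemeasurable.prodMk hXj)).aestronglyMeasurable
  · rintro ⟨ω, t⟩
    simp only [Function.uncurry, norm_prod, Real.exp_sum, ← Finset.prod_mul_distrib]
    exact Finset.prod_le_prod (fun _ _ => norm_nonneg _) fun j _ => hA j (t j) (X j ω)

variable [DecidableEq V] {R : Sym2 V → ℝ}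

lemma IsCenteredGaussianFamily.integral_prod_wickExp (hX : IsCenteredGaussianFamily P X)
    (hR : ∀ i j, ∫ ω, X i ω * X j ω ∂P = R s(i, j)) (w : V → ℂ) :
    ∫ ω, ∏ j, wickExp (R s(j, j)) (X j ω) (w j) ∂P =
      Complex.exp (∑ e : Edge V, R e * ∏ j ∈ (e : Sym2 V).toFinset, w j) := by
  have hsplit (ω : Ω) : ∏ j, wickExp (R s(j, j)) (X j ω) (w j) =
      Complex.exp (-∑ j, w j ^ 2 * R s(j, j) / 2) * Complex.exp (∑ j, w j * X j ω) := by
    simp_rw [wickExp, ← Complex.exp_sum, ← Complex.exp_add, Finset.sum_sub_distrib,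
      neg_add_eq_sub]
  have hedge (e : Edge V) : (Sym2.map w e).mul = ∏ j ∈ (e : Sym2 V).toFinset, w j := by
    obtain ⟨⟨a, b⟩, hab⟩ := e
    exact (prod_toFinset_mk (by simpa using hab) w).symm
  have hsum := sum_sum_sym2 fun e => (Sym2.map w e).mul * (R e : ℂ)
  simp only [Sym2.map_mk, Sym2.mul_mk, hedge] at hsum
  simp_rw [hsplit]
  rw [integral_const_mul, hX.integral_cexp_sum, ← Complex.exp_add]
  simp_rw [hR]
  rw [hsum, ← Finset.sum_div]
  congr 1
  simp only [sq, mul_comm (R _ : ℂ), two_nsmul]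
  ring

lemma prod_mul_prod_edge_pow (k w : V → ℂ) (n : Edge V → ℕ) :
    (∏ j, k j) * ∏ e : Edge V, (R e * ∏ j ∈ (e : Sym2 V).toFinset, w j) ^ n e / (n e).factorial =
      (∏ e : Edge V, (R e : ℂ) ^ n e / (n e).factorial) * ∏ j, k j * w j ^ degree n j := by
  simp_rw [Finset.prod_mul_distrib, prod_pow_degree, mul_pow, mul_div_right_comm,
    Finset.prod_mul_distrib]
  ring

lemma norm_prod_mul_prod_edge_pow_le {k w : V → ℂ} {A B : ℝ} (hk : ∀ j, ‖k j‖ ≤ A)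
    (hw : ∀ j, ‖w j‖ ≤ B) (n : Edge V → ℕ) :
    ‖(∏ j, k j) * ∏ e : Edge V,
        (R e * ∏ j ∈ (e : Sym2 V).toFinset, w j) ^ n e / (n e).factorial‖ ≤
      (∏ _j : V, A) * ∏ e : Edge V, (|R e| * B ^ 2) ^ n e / (n e).factorial := by
  simp only [norm_mul, norm_prod, norm_div, norm_pow, Complex.norm_natCast, Complex.norm_real,
    Real.norm_eq_abs]
  refine mul_le_mul (Finset.prod_le_prod (fun _ _ => norm_nonneg _) fun j _ => hk j)
    (Finset.prod_le_prod (fun _ _ => by positivity) fun e _ => ?_) (by positivity)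
    (Finset.prod_nonneg fun j _ => (norm_nonneg _).trans (hk j))
  have hends : ∏ j ∈ (e : Sym2 V).toFinset, ‖w j‖ ≤ B ^ 2 := by
    rw [← Sym2.card_toFinset_of_not_isDiag _ e.2, ← Finset.prod_const]
    exact Finset.prod_le_prod (fun _ _ => norm_nonneg _) fun j _ => hw j
  gcongr

lemma IsCenteredGaussianFamily.integral_prod_integral_wickExp
    (hX : IsCenteredGaussianFamily P X) (hR : ∀ i j, ∫ ω, X i ω * X j ω ∂P = R s(i, j))
    (ν : Measure T) [IsFiniteMeasure ν] {k w : V → T → ℂ} (hk : ∀ j, Measurable (k j))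
    (hw : ∀ j, Measurable (w j)) {A B : ℝ} (hA : ∀ j t, ‖k j t‖ ≤ A) (hB : ∀ j t, ‖w j t‖ ≤ B) :
    ∫ ω, ∏ j, ∫ t, k j t * wickExp (R s(j, j)) (X j ω) (w j t) ∂ν ∂P =
      ∫ t : V → T, (∏ j, k j (t j)) *
        Complex.exp (∑ e : Edge V, R e * ∏ j ∈ (e : Sym2 V).toFinset, w j (t j))
          ∂(Measure.pi fun _ => ν) := by
  rw [hX.integral_prod_integral_comm ν (f := fun j t x => k j t * wickExp (R s(j, j)) x (w j t))
    (A := fun j => A * Real.exp (B ^ 2 * |R s(j, j)| / 2)) (M := B)]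
  · simp_rw [Finset.prod_mul_distrib, integral_const_mul,
      hX.integral_prod_wickExp hR (fun j => w j (_ : T))]
  · intro j
    unfold wickExp
    fun_prop
  · intro j t x
    rw [norm_mul, mul_assoc]
    gcongr
    · exact (norm_nonneg _).trans (hA j t)
    · exact hA j t
    · exact norm_wickExp_le le_rfl x (hB j t)

theorem IsCenteredGaussianFamily.hasSum_integral_prod_integral_wickExp
    (hX : IsCenteredGaussianFamily P X) (hR : ∀ i j, ∫ ω, X i ω * X j ω ∂P = R s(i, j))
    (ν : Measure T) [IsFiniteMeasure ν] {k w : V → T → ℂ} (hk : ∀ j, Measurable (k j))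
    (hw : ∀ j, Measurable (w j)) {A B : ℝ} (hA : ∀ j t, ‖k j t‖ ≤ A) (hB : ∀ j t, ‖w j t‖ ≤ B) :
    HasSum (fun n : Edge V → ℕ => (∏ e : Edge V, (R e : ℂ) ^ n e / (n e).factorial) *
        ∏ j, ∫ t, k j t * w j t ^ degree n j ∂ν)
      (∫ ω, ∏ j, ∫ t, k j t * wickExp (R s(j, j)) (X j ω) (w j t) ∂ν ∂P) := by
  let F (n : Edge V → ℕ) (t : V → T) : ℂ := (∏ j, k j (t j)) * ∏ e : Edge V,
    (R e * ∏ j ∈ (e : Sym2 V).toFinset, w j (t j)) ^ n e / (n e).factorial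
  have hbound (n : Edge V → ℕ) (t : V → T) : ‖F n t‖ ≤ _ :=
    norm_prod_mul_prod_edge_pow_le (fun j => hA j (t j)) (fun j => hB j (t j)) n
  have hint (n : Edge V → ℕ) : Integrable (F n) (Measure.pi fun _ => ν) :=
    .of_bound (by fun_prop) _ (.of_forall (hbound n))
  have hmajorant := (summable_norm_prod fun e : Edge V =>
    NormedSpace.norm_expSeries_div_summable (|R e| * B ^ 2)).of_norm
  have hsum : Summable fun n => ∫ t, ‖F n t‖ ∂(Measure.pi fun _ => ν) := by
    refine .of_nonneg_of_le (fun n => integral_nonneg fun t => norm_nonneg _) (fun n => ?_)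
      ((hmajorant.mul_left (∏ _j : V, A)).mul_left ((Measure.pi fun _ : V => ν).real Set.univ))
    refine (integral_mono (hint n).norm (integrable_const _) (hbound n)).trans_eq ?_
    rw [integral_const, smul_eq_mul]
  have hF (n : Edge V → ℕ) : ∫ t, F n t ∂(Measure.pi fun _ => ν) =
      (∏ e : Edge V, (R e : ℂ) ^ n e / (n e).factorial) *
        ∏ j, ∫ t, k j t * w j t ^ degree n j ∂ν := by
    simp_rw [F, prod_mul_prod_edge_pow fun j => k j (_ : T)]
    rw [integral_const_mul, integral_fintype_prod_eq_prod fun j t => k j t * w j t ^ degree n j]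
  have hexp (t : V → T) : ∑' n, F n t = (∏ j, k j (t j)) *
      Complex.exp (∑ e : Edge V, R e * ∏ j ∈ (e : Sym2 V).toFinset, w j (t j)) := by
    simp_rw [F, tsum_mul_left, (hasSum_prod_pow_div_factorial _).tsum_eq]
  rw [hX.integral_prod_integral_wickExp hR ν hk hw hA hB]
  simp_rw [← hF, ← hexp]
  exact hasSum_integral_of_summable_integral_norm hint hsum

end Expansion

section WickSums

variable {Ω V : Type*} [MeasurableSpace Ω] [Fintype V] {P : Measure Ω}
  {X : V → Ω → ℝ} {R : Sym2 V → ℝ}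

lemma IsCenteredGaussianFamily.hasSum_integral_prod_wick [DecidableEq V]
    (hX : IsCenteredGaussianFamily P X)
    (hR : ∀ i j, ∫ ω, X i ω * X j ω ∂P = R s(i, j)) (hpos : ∀ j, 0 < R s(j, j)) (m : ℕ) :
    HasSum (fun n : Edge V → ℕ => (∏ e : Edge V, R e ^ n e / (n e).factorial) *
        ∏ j, (wickCoeff m (degree n j) : ℝ))
      (∫ ω, ∏ j, (wick (R s(j, j)) m (X j ω) + wick (R s(j, j)) (m + 1) (X j ω)) ∂P) := by
  have h := hX.hasSum_integral_prod_integral_wickExp hR circleMeasure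
    (k := fun _ φ => wickKernel m (circleMap 0 1 φ)) (w := fun _ φ => circleMap 0 1 φ)
    (fun _ => (measurable_wickKernel m).comp (by fun_prop)) (fun _ => by fun_prop)
    (fun _ φ => norm_wickKernel_le m (by simp)) (B := 1) (fun _ φ => by simp)
  simp only [fun k => integral_circleMeasure fun z => wickKernel m z * z ^ k,
    circleAverage_wickKernel_mul_pow,
    fun j x => integral_circleMeasure fun z => wickKernel m z * wickExp (R s(j, j)) x z,
    fun j x => (wick_add_wick_eq_circleAverage (hpos j) x m).symm] at h
  rw [← Complex.hasSum_ofReal, ← integral_complex_ofReal]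
  push_cast at h ⊢
  exact h

lemma prod_pow_div_factorial_mul_prod_wickCoeff_nonneg [DecidableEq V]
    (hnonneg : ∀ e, 0 ≤ R e) (m : ℕ) (n : Edge V → ℕ) :
    0 ≤ (∏ e : Edge V, R e ^ n e / (n e).factorial) * ∏ j, (wickCoeff m (degree n j) : ℝ) :=
  mul_nonneg (Finset.prod_nonneg fun _ _ => div_nonneg (pow_nonneg (hnonneg _) _)
    (Nat.cast_nonneg _)) (Finset.prod_nonneg fun _ _ => Nat.cast_nonneg _)

lemma IsCenteredGaussianFamily.integral_prod_wick_nonneg (hX : IsCenteredGaussianFamily P X)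
    (hR : ∀ i j, ∫ ω, X i ω * X j ω ∂P = R s(i, j)) (hnonneg : ∀ e, 0 ≤ R e)
    (hpos : ∀ j, 0 < R s(j, j)) (m : ℕ) :
    0 ≤ ∫ ω, ∏ j, (wick (R s(j, j)) m (X j ω) + wick (R s(j, j)) (m + 1) (X j ω)) ∂P := by
  classical
  exact (hX.hasSum_integral_prod_wick hR hpos m).nonneg
    (prod_pow_div_factorial_mul_prod_wickCoeff_nonneg hnonneg m)

lemma IsCenteredGaussianFamily.prod_pow_le_integral_prod_wick [DecidableEq V]
    (hX : IsCenteredGaussianFamily P X)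
    (hR : ∀ i j, ∫ ω, X i ω * X j ω ∂P = R s(i, j)) (hnonneg : ∀ e, 0 ≤ R e)
    (hpos : ∀ j, 0 < R s(j, j)) {m : ℕ} {k : Edge V → ℕ}
    (hk : ∀ j, m ≤ degree k j ∧ degree k j ≤ m + 1) :
    ∏ e : Edge V, R e ^ k e ≤ (m + 1).factorial ^ Fintype.card (Edge V) *
      ∫ ω, ∏ j, (wick (R s(j, j)) m (X j ω) + wick (R s(j, j)) (m + 1) (X j ω)) ∂P := by
  have hfact (e : Edge V) : ((k e).factorial : ℝ) ≤ (m + 1).factorial := by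
    obtain ⟨j, hj⟩ : ∃ j, j ∈ (e : Sym2 V) := ⟨_, Sym2.out_fst_mem _⟩
    exact mod_cast Nat.factorial_le ((le_degree k hj).trans (hk j).2)
  calc ∏ e : Edge V, R e ^ k e
      ≤ ∏ e : Edge V, ((m + 1).factorial * (R e ^ k e / (k e).factorial)) := by
        refine Finset.prod_le_prod (fun e _ => pow_nonneg (hnonneg _) _) fun e _ => ?_
        rw [mul_div_assoc', le_div_iff₀ (by positivity), mul_comm]
        exact mul_le_mul_of_nonneg_right (hfact e) (pow_nonneg (hnonneg _) _)
    _ = (m + 1).factorial ^ Fintype.card (Edge V) *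
          ((∏ e : Edge V, R e ^ k e / (k e).factorial) * 1) := by
        simp [Finset.prod_mul_distrib]
    _ ≤ (m + 1).factorial ^ Fintype.card (Edge V) *
          ((∏ e : Edge V, R e ^ k e / (k e).factorial) *
            ∏ j, (wickCoeff m (degree k j) : ℝ)) := by
        gcongr
        · exact Finset.prod_nonneg fun e _ => div_nonneg (pow_nonneg (hnonneg _) _)
            (Nat.cast_nonneg _)
        · exact Finset.one_le_prod fun j _ => mod_cast wickCoeff_pos (hk j)
    _ ≤ _ := by
        gcongr
        exact le_hasSum (hX.hasSum_integral_prod_wick hR hpos m) k fun n _ =>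
          prod_pow_div_factorial_mul_prod_wickCoeff_nonneg hnonneg m n

end WickSums

section TruncatedSeries

variable {A : ℝ} {b : ℂ}

lemma norm_cexp_sub_sum_le (m : ℕ) (hA : 1 ≤ A) (hb : Real.exp b.re ≤ A) :
    ‖Complex.exp b - ∑ n ∈ Finset.range m, b ^ n / n.factorial‖ ≤ ‖b‖ ^ m * A := by
  obtain _ | m := m
  · simpa [Complex.norm_exp] using hb
  have hsmooth : ContDiff ℝ ⊤ fun t : ℝ => Complex.exp (b * t) :=
    (contDiff_const.mul Complex.ofRealCLM.contDiff).cexp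
  have hderiv (n : ℕ) {t : ℝ} (ht : t ∈ Set.Icc (0 : ℝ) 1) :
      iteratedDerivWithin n (fun t : ℝ => Complex.exp (b * t)) (Set.Icc 0 1) t =
        b ^ n * Complex.exp (b * t) := by
    rw [iteratedDerivWithin_eq_iteratedDeriv (uniqueDiffOn_Icc one_pos)
      (hsmooth.of_le le_top).contDiffAt ht,
      iteratedDeriv_comp_ofReal (F := fun z => Complex.exp (b * z)) (by fun_prop),
      iteratedDeriv_cexp_const_mul]
  have hbound : ∀ t ∈ Set.Icc (0 : ℝ) 1,
      ‖iteratedDerivWithin (m + 1) (fun t : ℝ => Complex.exp (b * t)) (Set.Icc 0 1) t‖ ≤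
        ‖b‖ ^ (m + 1) * A := by
    intro t ht
    rw [hderiv _ ht, norm_mul, norm_pow, Complex.norm_exp, Complex.re_mul_ofReal]
    gcongr
    obtain h | h := le_total b.re 0
    · exact (Real.exp_le_one_iff.2 (mul_nonpos_of_nonpos_of_nonneg h ht.1)).trans hA
    · exact (Real.exp_le_exp.2 (mul_le_of_le_one_right h ht.2)).trans hb
  have h := taylor_mean_remainder_bound zero_le_one (hsmooth.of_le le_top).contDiffOn
    (Set.right_mem_Icc.2 zero_le_one) hbound
  rw [taylor_within_apply] at h
  simp only [hderiv _ (Set.left_mem_Icc.2 (zero_le_one' ℝ)), sub_zero, one_pow, mul_one,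
    Complex.ofReal_zero, Complex.ofReal_one, mul_zero, Complex.exp_zero, Complex.real_smul,
    Complex.ofReal_inv, Complex.ofReal_natCast, inv_mul_eq_div] at h
  exact h.trans (div_le_self (by positivity) (mod_cast m.factorial_pos))

lemma norm_tsum_ite_min_eq_le {m k : ℕ} (hk : k ≤ m) (hA : 1 ≤ A) (hb : Real.exp b.re ≤ A) :
    ‖∑' n : ℕ, if min n m = k then b ^ n / n.factorial else 0‖ ≤ ‖b‖ ^ k * A := by
  obtain rfl | hk := hk.eq_or_lt
  · have htail : HasSum (fun n : ℕ => if min n k = k then b ^ n / n.factorial else 0)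
        (Complex.exp b - ∑ n ∈ Finset.range k, b ^ n / n.factorial) := by
      have hcompl := (hasSum_subtype_iff_indicator (s := {n | n ∉ Finset.range k})).1 <|
        (Finset.range k).hasSum_compl_iff.2 <| (sub_add_cancel (Complex.exp b) _).symm ▸
          Complex.exp_eq_exp_ℂ ▸ NormedSpace.expSeries_div_hasSum_exp b
      exact hcompl.congr_fun fun n => by simp [Set.indicator_apply]
    rw [htail.tsum_eq]
    exact norm_cexp_sub_sum_le k hA hb
  · have hmin (n : ℕ) : min n m = k ↔ n = k := by lia
    simp_rw [hmin]
    rw [tsum_ite_eq, norm_div, norm_pow, Complex.norm_natCast]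
    exact (div_le_self (by positivity) (mod_cast k.factorial_pos)).trans
      (le_mul_of_one_le_right (by positivity) hA)

variable {V : Type*} [Fintype V] [DecidableEq V]

lemma ite_le_degree_prod_eq_sum (m : ℕ) (n : Edge V → ℕ) (g : Edge V → ℂ) :
    (if ∀ j, m ≤ degree n j then ∏ e, g e else 0) =
      ∑ n' ∈ truncatedGraphs V m, ∏ e, if min (n e) m = n' e then g e else 0 := by
  have hprod (n' : Edge V → ℕ) : (∏ e, if min (n e) m = n' e then g e else 0) =
      if (fun e => min (n e) m) = n' then ∏ e, g e else 0 := by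
    rw [Finset.prod_ite_zero]
    simp [funext_iff]
  simp_rw [hprod]
  rw [Finset.sum_ite_eq]
  simp [mem_truncatedGraphs, le_degree_min_iff]

lemma norm_tsum_ite_le_degree_le (m : ℕ) {b : Edge V → ℂ} (hA : 1 ≤ A)
    (hb : ∀ e, Real.exp (b e).re ≤ A) :
    ‖∑' n : Edge V → ℕ, if ∀ j, m ≤ degree n j then ∏ e, b e ^ n e / (n e).factorial else 0‖ ≤
      A ^ Fintype.card (Edge V) * ∑ n ∈ truncatedGraphs V m, ∏ e, ‖b e‖ ^ n e := by
  have hsum (n' : Edge V → ℕ) := hasSum_prod (f := fun e k =>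
    if min k m = n' e then b e ^ k / (k.factorial : ℂ) else 0) fun e =>
      (NormedSpace.norm_expSeries_div_summable (b e)).of_nonneg_of_le (fun _ => norm_nonneg _)
        fun k => by split_ifs <;> simp only [norm_zero, le_refl]; positivity
  simp_rw [ite_le_degree_prod_eq_sum]
  rw [(hasSum_sum fun n' _ => hsum n').tsum_eq, Finset.mul_sum]
  refine norm_sum_le_of_le _ fun n hn => ?_
  calc ‖∏ e, ∑' k : ℕ, if min k m = n e then b e ^ k / (k.factorial : ℂ) else 0‖
      ≤ ∏ e, (‖b e‖ ^ n e * A) := by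
        rw [norm_prod]
        exact Finset.prod_le_prod (fun _ _ => norm_nonneg _) fun e _ =>
          norm_tsum_ite_min_eq_le ((mem_truncatedGraphs.1 hn).1 e) hA (hb e)
    _ = A ^ Fintype.card (Edge V) * ∏ e, ‖b e‖ ^ n e := by
        simp [Finset.prod_mul_distrib, mul_comm]

end TruncatedSeries

section Frequencies

lemma norm_pow_mul_norm_cexp_le {a C : ℝ} (hC : 1 ≤ C) (ha : C⁻¹ ≤ a) (ha' : a ≤ C) {z : ℂ}
    (hz : |z.im| ≤ 1) (N : ℕ) :
    ‖z‖ ^ N * ‖Complex.exp (-(a * z ^ 2) / 2)‖ ≤ N.factorial * Real.exp (3 * C / 2) := by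
  have hapos : 0 < a := (inv_pos.2 (one_pos.trans_le hC)).trans_le ha
  have hre : (-(a * z ^ 2) / 2 : ℂ).re = a * z.im ^ 2 - a * ‖z‖ ^ 2 / 2 := by
    rw [Complex.sq_norm, Complex.normSq_apply]
    have : (-(a * z ^ 2) / 2 : ℂ) = ((-a / 2 : ℝ) : ℂ) * z ^ 2 := by push_cast; ring
    rw [this, Complex.re_ofReal_mul, sq z, Complex.mul_re]
    ring
  have him : a * z.im ^ 2 ≤ a := mul_le_of_le_one_right hapos.le ((sq_le_one_iff_abs_le_one _).2 hz)
  have hsquare : ‖z‖ - a * ‖z‖ ^ 2 / 2 ≤ a⁻¹ / 2 := by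
    have : a⁻¹ / 2 - (‖z‖ - a * ‖z‖ ^ 2 / 2) = (a * ‖z‖ - 1) ^ 2 / (2 * a) := by
      field_simp
      ring
    have : 0 ≤ (a * ‖z‖ - 1) ^ 2 / (2 * a) := by positivity
    linarith
  have hpow := Real.pow_div_factorial_le_exp ‖z‖ (norm_nonneg z) N
  rw [div_le_iff₀ (by positivity)] at hpow
  calc ‖z‖ ^ N * ‖Complex.exp (-(a * z ^ 2) / 2)‖
      ≤ Real.exp ‖z‖ * N.factorial * Real.exp (a * z.im ^ 2 - a * ‖z‖ ^ 2 / 2) := by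
        rw [Complex.norm_exp, hre]
        gcongr
    _ = N.factorial * Real.exp (a * z.im ^ 2 + (‖z‖ - a * ‖z‖ ^ 2 / 2)) := by
        rw [mul_right_comm, ← Real.exp_add, mul_comm]
        ring_nf
    _ ≤ N.factorial * Real.exp (3 * C / 2) := by
        gcongr
        linarith [inv_le_of_inv_le₀ (one_pos.trans_le hC) ha]

lemma neg_two_le_re_mul {θ : ℝ} {u v : ℂ} (hu : ‖u - θ‖ ≤ 1) (hv : ‖v - θ‖ ≤ 1) :
    -2 ≤ (u * v).re := by
  have hure := (Complex.abs_re_le_norm _).trans hu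
  have hvre := (Complex.abs_re_le_norm _).trans hv
  have huim := (Complex.abs_im_le_norm _).trans hu
  have hvim := (Complex.abs_im_le_norm _).trans hv
  simp only [Complex.sub_re, Complex.sub_im, Complex.ofReal_re, Complex.ofReal_im, sub_zero,
    abs_le] at hure hvre huim hvim
  have hre : -1 ≤ u.re * v.re := by
    have : (u.re - v.re) ^ 2 ≤ 2 ^ 2 := sq_le_sq' (by linarith) (by linarith)
    linarith [sq_nonneg (u.re + v.re)]
  have him : u.im * v.im ≤ 1 := by
    have hnorm : |u.im| * |v.im| ≤ 1 := mul_le_one₀ (abs_le.2 huim) (abs_nonneg _) (abs_le.2 hvim)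
    exact (le_abs_self _).trans (abs_mul u.im v.im ▸ hnorm)
  rw [Complex.mul_re]
  linarith

end Frequencies

section Correlations

variable {Ω V : Type*} [MeasurableSpace Ω] [Fintype V] [DecidableEq V] {P : Measure Ω}
  {X : V → Ω → ℝ} {R : Sym2 V → ℝ}

lemma IsCenteredGaussianFamily.integral_prod_hFunC (hX : IsCenteredGaussianFamily P X)
    (hR : ∀ i j, ∫ ω, X i ω * X j ω ∂P = R s(i, j)) (hpos : ∀ j, 0 < R s(j, j)) (m : ℕ)
    (z : V → ℂ) :
    ∫ ω, ∏ j, hFunC m (z j) (X j ω) (R s(j, j)) ∂P =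
      (∏ j, Complex.exp (-(R s(j, j) * z j ^ 2) / 2)) *
        ∑' n : Edge V → ℕ, if ∀ j, m ≤ degree n j then
          ∏ e : Edge V, (R e * ∏ j ∈ (e : Sym2 V).toFinset, (Complex.I * z j)) ^ n e /
            (n e).factorial else 0 := by
  obtain ⟨B, hB⟩ := Finite.exists_le fun j => ‖z j‖
  have h := hX.hasSum_integral_prod_integral_wickExp hR circleMeasure
    (k := fun _ φ => truncKernel m (circleMap 0 2 φ))
    (w := fun j φ => Complex.I * z j * circleMap 0 2 φ)
    (fun _ => (measurable_truncKernel m).comp (by fun_prop)) (fun _ => by fun_prop)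
    (fun _ φ => norm_truncKernel_le m (by simp)) (B := B * 2)
    (fun j φ => by simpa using hB j)
  have hcoeff (n : Edge V → ℕ) (j : V) : ∫ φ, truncKernel m (circleMap 0 2 φ) *
      (Complex.I * z j * circleMap 0 2 φ) ^ degree n j ∂circleMeasure =
        if m ≤ degree n j then (Complex.I * z j) ^ degree n j else 0 := by
    simp_rw [mul_pow _ (circleMap 0 2 _), mul_left_comm (truncKernel m _)]
    rw [integral_const_mul, integral_circleMeasure fun u => truncKernel m u * u ^ degree n j,
      circleAverage_truncKernel_mul_pow, mul_ite, mul_one, mul_zero]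
  simp_rw [hFunC_eq_circleAverage m (hpos _), Finset.prod_mul_distrib]
  rw [integral_const_mul]
  simp_rw [← integral_circleMeasure, ← h.tsum_eq, hcoeff, Finset.prod_ite_zero]
  congr 2 with n
  simp only [Finset.mem_univ, true_implies]
  split_ifs
  · simp_rw [prod_pow_degree, ← Finset.prod_mul_distrib, mul_pow, mul_div_right_comm]
  · rw [mul_zero]

end Correlations

section Bounds

variable {V : Type*} {R : Sym2 V → ℝ} {C θ : ℝ}

lemma IsAdmissible.diag_pos (hR : IsAdmissible C R) (j : V) : 0 < R s(j, j) :=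
  (inv_pos.2 (one_pos.trans_le hR.one_le)).trans_le (hR.inv_le_diag j)

lemma IsAdmissible.re_mul_prod_I_mul_le [DecidableEq V] (hR : IsAdmissible C R) {z : V → ℂ}
    (hz : ∀ j, ‖z j - θ‖ ≤ 1) (e : Edge V) :
    (R e * ∏ j ∈ (e : Sym2 V).toFinset, (Complex.I * z j)).re ≤ 2 * C := by
  obtain ⟨⟨a, b⟩, hab⟩ := e
  have hne : a ≠ b := by simpa using hab
  have hI : (R s(a, b) : ℂ) * (Complex.I * z a * (Complex.I * z b)) =
      ((-R s(a, b) : ℝ) : ℂ) * (z a * z b) := by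
    rw [mul_mul_mul_comm, Complex.I_mul_I, Complex.ofReal_neg]
    ring
  change (R s(a, b) * ∏ j ∈ s(a, b).toFinset, (Complex.I * z j)).re ≤ 2 * C
  rw [prod_toFinset_mk hne, hI, Complex.re_ofReal_mul]
  calc -R s(a, b) * (z a * z b).re
      ≤ R s(a, b) * 2 := by
        rw [neg_mul, ← mul_neg]
        exact mul_le_mul_of_nonneg_left (neg_le.1 (neg_two_le_re_mul (hz a) (hz b)))
          (hR.nonneg _)
    _ ≤ 2 * C := by linarith [hR.le s(a, b)]

variable {Ω : Type*} [MeasurableSpace Ω] [Fintype V] {P : Measure Ω} {X : V → Ω → ℝ}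

lemma IsCenteredGaussianFamily.integral_prod_iteratedDeriv_hFun (hX : IsCenteredGaussianFamily P X)
    (hpos : ∀ j, 0 < R s(j, j)) (m r : ℕ) (θ : ℝ) :
    ∫ ω, ∏ j, iteratedDeriv r (fun t => hFun m t (X j ω) (R s(j, j))) θ ∂P =
      r.factorial ^ Fintype.card V * ∫ φ : V → ℝ,
        (∏ j, ((circleMap (θ : ℂ) 1 (φ j) - θ) ^ r)⁻¹) *
          ∫ ω, ∏ j, hFunC m (circleMap θ 1 (φ j)) (X j ω) (R s(j, j)) ∂P
            ∂(Measure.pi fun _ => circleMeasure) := by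
  have hnorm (φ : ℝ) : ‖circleMap (θ : ℂ) 1 φ‖ ≤ |θ| + 1 := by
    simpa using norm_le_norm_add_norm_sub' (circleMap (θ : ℂ) 1 φ) (θ : ℂ)
  have hswap := hX.integral_prod_integral_comm circleMeasure
    (f := fun j φ x =>
      ((circleMap (θ : ℂ) 1 φ - θ) ^ r)⁻¹ * hFunC m (circleMap θ 1 φ) x (R s(j, j)))
    (A := fun j => Real.exp (R s(j, j) * (|θ| + 1) ^ 2 / 2) *
      ((2 + m) * Real.exp ((2 * (|θ| + 1)) ^ 2 * R s(j, j) / 2))) (M := 2 * (|θ| + 1))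
    (fun j => .mul (by fun_prop) ((continuous_hFunC m _).measurable.comp
      (f := fun p : ℝ × ℝ => (circleMap θ 1 p.1, p.2)) (by fun_prop)))
    (fun j φ x => by
      simpa [mul_assoc] using norm_hFunC_le m (hpos j) (hnorm φ) x)
  simp_rw [iteratedDeriv_hFun_eq_circleAverage, ← fun j ω => integral_circleMeasure
    fun z => ((z - θ) ^ r)⁻¹ * hFunC m z (X j ω) (R s(j, j))]
  simp_rw [Finset.prod_mul_distrib, integral_const_mul, hswap, Finset.prod_mul_distrib,
    integral_const_mul, Finset.prod_const, Finset.card_univ]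

variable [DecidableEq V]

lemma IsAdmissible.prod_norm_cexp_mul_prod_pow_le (hR : IsAdmissible C R) {z : V → ℂ}
    (hz : ∀ j, |(z j).im| ≤ 1) {n : Edge V → ℕ} {m : ℕ} (hn : ∀ e, n e ≤ m) :
    (∏ j, ‖Complex.exp (-(R s(j, j) * z j ^ 2) / 2)‖) *
        ∏ e : Edge V, ‖R e * ∏ j ∈ (e : Sym2 V).toFinset, (Complex.I * z j)‖ ^ n e ≤
      ((Fintype.card (Edge V) * m).factorial * Real.exp (3 * C / 2)) ^ Fintype.card V *
        ∏ e : Edge V, R e ^ n e := by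
  have hvertex (j : V) : ‖z j‖ ^ degree n j * ‖Complex.exp (-(R s(j, j) * z j ^ 2) / 2)‖ ≤
      (Fintype.card (Edge V) * m).factorial * Real.exp (3 * C / 2) := by
    refine (norm_pow_mul_norm_cexp_le hR.one_le (hR.inv_le_diag j) (hR.le _) (hz j) _).trans ?_
    gcongr
    exact degree_le_card_mul hn j
  calc _ = (∏ j, ‖z j‖ ^ degree n j * ‖Complex.exp (-(R s(j, j) * z j ^ 2) / 2)‖) *
          ∏ e : Edge V, R e ^ n e := by
        simp only [norm_mul, norm_prod, Complex.norm_I, one_mul, mul_pow, Finset.prod_mul_distrib,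
          prod_pow_degree, Finset.prod_const_one, Complex.norm_of_nonneg (hR.nonneg _)]
        ring
    _ ≤ _ := by
        rw [← Finset.card_univ (α := V), ← Finset.prod_const]
        exact mul_le_mul_of_nonneg_right
          (Finset.prod_le_prod (fun j _ => by positivity) fun j _ => hvertex j)
          (hR.prod_pow_nonneg n)

namespace IsCenteredGaussianFamily

lemma norm_integral_prod_hFunC_le (hX : IsCenteredGaussianFamily P X)
    (hcov : ∀ i j, ∫ ω, X i ω * X j ω ∂P = R s(i, j)) (hR : IsAdmissible C R) (m : ℕ)
    {z : V → ℂ} (hz : ∀ j, ‖z j - θ‖ ≤ 1) :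
    ‖∫ ω, ∏ j, hFunC m (z j) (X j ω) (R s(j, j)) ∂P‖ ≤
      Real.exp (2 * C) ^ Fintype.card (Edge V) *
        ((Fintype.card (Edge V) * m).factorial * Real.exp (3 * C / 2)) ^ Fintype.card V *
          ∑ n ∈ truncatedGraphs V m, ∏ e : Edge V, R e ^ n e := by
  have hA : 1 ≤ Real.exp (2 * C) := Real.one_le_exp (by linarith [hR.one_le])
  have him (j : V) : |(z j).im| ≤ 1 := by
    simpa using (Complex.abs_im_le_norm (z j - θ)).trans (hz j)
  have hb (e : Edge V) : Real.exp
      (R e * ∏ j ∈ (e : Sym2 V).toFinset, (Complex.I * z j)).re ≤ Real.exp (2 * C) :=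
    Real.exp_le_exp.2 (hR.re_mul_prod_I_mul_le hz e)
  rw [hX.integral_prod_hFunC hcov hR.diag_pos, norm_mul, norm_prod]
  refine (mul_le_mul_of_nonneg_left (norm_tsum_ite_le_degree_le m hA hb)
    (by positivity)).trans ?_
  rw [mul_left_comm, mul_assoc]
  refine mul_le_mul_of_nonneg_left ?_ (by positivity)
  rw [Finset.mul_sum, Finset.mul_sum]
  exact Finset.sum_le_sum fun n hn =>
    hR.prod_norm_cexp_mul_prod_pow_le him (mem_truncatedGraphs.1 hn).1

lemma sum_truncatedGraphs_le (hX : IsCenteredGaussianFamily P X)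
    (hcov : ∀ i j, ∫ ω, X i ω * X j ω ∂P = R s(i, j)) (hR : IsAdmissible C R) (m : ℕ) :
    ∑ n ∈ truncatedGraphs V m, ∏ e : Edge V, R e ^ n e ≤
      (truncatedGraphs V m).card * (C ^ m * (m + 1).factorial) ^ Fintype.card (Edge V) *
        ∫ ω, ∏ j, (wick (R s(j, j)) m (X j ω) + wick (R s(j, j)) (m + 1) (X j ω)) ∂P := by
  have hC : 0 ≤ C := zero_le_one.trans hR.one_le
  rw [mul_assoc, ← nsmul_eq_mul]
  refine Finset.sum_le_card_nsmul _ _ _ fun n hn => ?_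
  obtain ⟨hle, hdeg⟩ := mem_truncatedGraphs.1 hn
  obtain ⟨k, hk, hnk⟩ := hR.exists_degree_le_succ hdeg
  have hsum : ∑ e, n e ≤ m * Fintype.card (Edge V) := by
    simpa [mul_comm m] using Finset.univ.sum_le_card_nsmul n m fun e _ => hle e
  calc ∏ e : Edge V, R e ^ n e
      ≤ C ^ (∑ e, n e) * ∏ e : Edge V, R e ^ k e := hnk
    _ ≤ C ^ (m * Fintype.card (Edge V)) * ((m + 1).factorial ^ Fintype.card (Edge V) *
          ∫ ω, ∏ j, (wick (R s(j, j)) m (X j ω) + wick (R s(j, j)) (m + 1) (X j ω)) ∂P) := by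
        gcongr
        · exact hR.prod_pow_nonneg k
        · exact hR.one_le
        · exact hX.prod_pow_le_integral_prod_wick hcov hR.nonneg hR.diag_pos hk
    _ = _ := by rw [mul_pow, ← pow_mul, mul_assoc]

end IsCenteredGaussianFamily

/-- The constant of the correlation bound for the functions `hFunC m` at complex frequencies. -/
def correlationConst (V : Type*) [Fintype V] [DecidableEq V] (C : ℝ) (m : ℕ) : ℝ :=
  (truncatedGraphs V m).card *
    (Real.exp (2 * C) * (C ^ m * (m + 1).factorial)) ^ Fintype.card (Edge V) *
    ((Fintype.card (Edge V) * m).factorial * Real.exp (3 * C / 2)) ^ Fintype.card V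

lemma correlationConst_nonneg (hC : 0 ≤ C) (m : ℕ) : 0 ≤ correlationConst V C m := by
  rw [correlationConst]
  positivity

namespace IsCenteredGaussianFamily

theorem norm_integral_prod_hFunC_le_integral_prod_wick (hX : IsCenteredGaussianFamily P X)
    (hcov : ∀ i j, ∫ ω, X i ω * X j ω ∂P = R s(i, j)) (hR : IsAdmissible C R) (m : ℕ)
    {z : V → ℂ} (hz : ∀ j, ‖z j - θ‖ ≤ 1) :
    ‖∫ ω, ∏ j, hFunC m (z j) (X j ω) (R s(j, j)) ∂P‖ ≤ correlationConst V C m *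
      ∫ ω, ∏ j, (wick (R s(j, j)) m (X j ω) + wick (R s(j, j)) (m + 1) (X j ω)) ∂P := by
  refine (hX.norm_integral_prod_hFunC_le hcov hR m hz).trans ((mul_le_mul_of_nonneg_left
    (hX.sum_truncatedGraphs_le hcov hR m) (by positivity)).trans_eq ?_)
  rw [correlationConst]
  ring

theorem norm_integral_prod_iteratedDeriv_hFun_le (hX : IsCenteredGaussianFamily P X)
    (hcov : ∀ i j, ∫ ω, X i ω * X j ω ∂P = R s(i, j)) (hR : IsAdmissible C R) (m r : ℕ) (θ : ℝ) :
    ‖∫ ω, ∏ j, iteratedDeriv r (fun t => hFun m t (X j ω) (R s(j, j))) θ ∂P‖ ≤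
      r.factorial ^ Fintype.card V * correlationConst V C m *
        ∫ ω, ∏ j, (wick (R s(j, j)) m (X j ω) + wick (R s(j, j)) (m + 1) (X j ω)) ∂P := by
  rw [hX.integral_prod_iteratedDeriv_hFun hR.diag_pos, norm_mul, norm_pow, Complex.norm_natCast,
    mul_assoc]
  refine mul_le_mul_of_nonneg_left ?_ (by positivity)
  refine (norm_integral_le_of_norm_le_const (C := correlationConst V C m * _)
    (.of_forall fun φ => ?_)).trans_eq (by rw [probReal_univ, mul_one])
  rw [norm_mul, norm_prod]
  simpa using hX.norm_integral_prod_hFunC_le_integral_prod_wick (θ := θ)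
    (z := fun j => circleMap θ 1 (φ j)) hcov hR m fun j => by simp

end IsCenteredGaussianFamily

end Bounds

section Covariance

variable {d : ℕ} {s : Fin d → ℝ} {α ε Λ : ℝ}

lemma anorm_nonneg (s x : Fin d → ℝ) : 0 ≤ anorm s x :=
  Finset.sum_nonneg fun _ _ => Real.rpow_nonneg (abs_nonneg _) _

lemma anorm_zero (hs : ∀ j, 1 ≤ s j) : anorm s 0 = 0 := by
  refine Finset.sum_eq_zero fun j _ => ?_
  rw [Pi.zero_apply, abs_zero, Real.zero_rpow (one_div_ne_zero (one_pos.trans_le (hs j)).ne')]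

lemma anorm_sub_comm (s x y : Fin d → ℝ) : anorm s (x - y) = anorm s (y - x) := by
  simp only [anorm, Pi.sub_apply, abs_sub_comm]

lemma anorm_add_le (hs : ∀ j, 1 ≤ s j) (x y : Fin d → ℝ) :
    anorm s (x + y) ≤ anorm s x + anorm s y := by
  rw [anorm, anorm, anorm, ← Finset.sum_add_distrib]
  refine Finset.sum_le_sum fun j _ => ?_
  have hnonneg : 0 ≤ 1 / s j := one_div_nonneg.2 (zero_le_one.trans (hs j))
  have hle : 1 / s j ≤ 1 := div_le_one_of_le₀ (hs j) (zero_le_one.trans (hs j))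
  exact (Real.rpow_le_rpow (abs_nonneg _) (abs_add_le (x j) (y j)) hnonneg).trans
    (Real.rpow_add_le_add_rpow (abs_nonneg _) (abs_nonneg _) hnonneg hle)

/-- The profile `(ε / (|x|_s + ε)) ^ α` to which the standing covariance bound compares the
covariance at two points with difference `x`. -/
def covProfile (s : Fin d → ℝ) (α ε : ℝ) (x : Fin d → ℝ) : ℝ := (ε / (anorm s x + ε)) ^ α

lemma covProfile_pos (hε : 0 < ε) (x : Fin d → ℝ) : 0 < covProfile s α ε x := by
  have := anorm_nonneg s x
  rw [covProfile]
  positivity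

lemma covProfile_zero (hs : ∀ j, 1 ≤ s j) (hε : 0 < ε) : covProfile s α ε 0 = 1 := by
  rw [covProfile, anorm_zero hs, zero_add, div_self hε.ne', Real.one_rpow]

lemma covProfile_le_one (hα : 0 ≤ α) (hε : 0 < ε) (x : Fin d → ℝ) : covProfile s α ε x ≤ 1 := by
  have := anorm_nonneg s x
  exact Real.rpow_le_one (by positivity) (div_le_one_of_le₀ (by linarith) (by positivity)) hα

lemma covProfile_mul_covProfile_le (hs : ∀ j, 1 ≤ s j) (hα : 0 ≤ α) (hε : 0 < ε)
    (v a b : Fin d → ℝ) :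
    covProfile s α ε (v - a) * covProfile s α ε (v - b) ≤ covProfile s α ε (a - b) := by
  have htri : anorm s (a - b) ≤ anorm s (v - a) + anorm s (v - b) := by
    rw [anorm_sub_comm s v a, ← sub_add_sub_cancel a v b]
    exact anorm_add_le hs _ _
  have ha := anorm_nonneg s (v - a)
  have hb := anorm_nonneg s (v - b)
  have hab := anorm_nonneg s (a - b)
  rw [covProfile, covProfile, ← Real.mul_rpow (by positivity) (by positivity), covProfile]
  refine Real.rpow_le_rpow (by positivity) ?_ hα
  rw [div_mul_div_comm, div_le_div_iff₀ (by positivity) (by positivity), mul_assoc]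
  refine mul_le_mul_of_nonneg_left ?_ hε.le
  linarith [mul_nonneg ha hb, mul_le_mul_of_nonneg_left htri hε.le]

lemma covBound_iff (hε : 0 < ε) {R : (Fin d → ℝ) → (Fin d → ℝ) → ℝ} :
    CovBound s α Λ ε R ↔ ∀ x y, covProfile s α ε (x - y) / Λ ≤ R x y ∧
      R x y ≤ Λ * covProfile s α ε (x - y) := by
  refine forall₂_congr fun x y => ?_
  have := anorm_nonneg s (x - y)
  rw [covProfile, Real.div_rpow hε.le (by positivity), div_div, mul_comm _ Λ, mul_div_assoc]

lemma CovBound.isAdmissible {V : Type*} {R : (Fin d → ℝ) → (Fin d → ℝ) → ℝ}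
    (h : CovBound s α Λ ε R) (hs : ∀ j, 1 ≤ s j) (hα : 0 ≤ α) (hε : 0 < ε) (hΛ : 1 ≤ Λ)
    (x : V → Fin d → ℝ) {S : Sym2 V → ℝ} (hS : ∀ i j, S s(i, j) = R (x i) (x j)) :
    IsAdmissible (Λ ^ 3) S := by
  have hΛ₀ : 0 < Λ := one_pos.trans_le hΛ
  have hbound (i j : V) : covProfile s α ε (x i - x j) / Λ ≤ S s(i, j) ∧
      S s(i, j) ≤ Λ * covProfile s α ε (x i - x j) :=
    hS i j ▸ (covBound_iff hε).1 h (x i) (x j)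
  have hpos (z : Fin d → ℝ) : 0 < covProfile s α ε z := covProfile_pos hε z
  have hnonneg (i j : V) : 0 ≤ S s(i, j) := (div_pos (hpos _) hΛ₀).le.trans (hbound i j).1
  refine ⟨one_le_pow₀ hΛ, ?_, ?_, fun j => ?_, fun v a b => ?_⟩
  · rintro ⟨i, j⟩
    exact hnonneg i j
  · rintro ⟨i, j⟩
    exact (hbound i j).2.trans <| (mul_le_of_le_one_right hΛ₀.le (covProfile_le_one hα hε _)).trans
      (le_self_pow₀ hΛ three_ne_zero)
  · have hdiag := (hbound j j).1
    rw [sub_self, covProfile_zero hs hε, one_div] at hdiag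
    exact (inv_anti₀ hΛ₀ (le_self_pow₀ hΛ three_ne_zero)).trans hdiag
  · calc S s(v, a) * S s(v, b)
        ≤ (Λ * covProfile s α ε (x v - x a)) * (Λ * covProfile s α ε (x v - x b)) :=
          mul_le_mul (hbound v a).2 (hbound v b).2 (hnonneg v b) (mul_pos hΛ₀ (hpos _)).le
      _ = Λ ^ 2 * (covProfile s α ε (x v - x a) * covProfile s α ε (x v - x b)) := by ring
      _ ≤ Λ ^ 2 * covProfile s α ε (x a - x b) := by
          gcongr
          exact covProfile_mul_covProfile_le hs hα hε _ _ _
      _ = Λ ^ 3 * (covProfile s α ε (x a - x b) / Λ) := by field_simp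
      _ ≤ Λ ^ 3 * S s(a, b) := by
          gcongr
          exact (hbound a b).1

end Covariance

theorem stmt0_general {d : ℕ} {s : Fin d → ℝ} (hs : ∀ j, 1 ≤ s j) {α Λ : ℝ} (hα : 0 ≤ α)
    (hΛ : 1 ≤ Λ) (V : Type*) [Fintype V] (m r : ℕ) :
    ∃ C > 0, ∀ ε > 0, ∀ (Ω : Type*) (_ : MeasurableSpace Ω) (P : Measure Ω)
      (Φ : (Fin d → ℝ) → Ω → ℝ), IsCenteredGaussianFamily P Φ →
        CovBound s α Λ ε (fun x y => ∫ ω, Φ x ω * Φ y ω ∂P) →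
        ∀ (θ : ℝ) (x : V → Fin d → ℝ),
          ‖∫ ω, ∏ j, iteratedDeriv r
              (fun t => hFun m t (Φ (x j) ω) (∫ ω', Φ (x j) ω' ^ 2 ∂P)) θ ∂P‖ ≤
            C * ∫ ω, ∏ j,
              (wick (∫ ω', Φ (x j) ω' ^ 2 ∂P) m (Φ (x j) ω) +
                wick (∫ ω', Φ (x j) ω' ^ 2 ∂P) (m + 1) (Φ (x j) ω)) ∂P := by
  classical
  have hC : 0 ≤ r.factorial ^ Fintype.card V * correlationConst V (Λ ^ 3) m :=
    mul_nonneg (by positivity) (correlationConst_nonneg (by positivity) m)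
  refine ⟨r.factorial ^ Fintype.card V * correlationConst V (Λ ^ 3) m + 1, by positivity, ?_⟩
  intro ε hε Ω _ P Φ hΦ hcov θ x
  let R : Sym2 V → ℝ :=
    Sym2.lift ⟨fun i j => ∫ ω, Φ (x i) ω * Φ (x j) ω ∂P, fun i j => by simp_rw [mul_comm]⟩
  have hR : IsAdmissible (Λ ^ 3) R := hcov.isAdmissible hs hα hε hΛ x fun _ _ => rfl
  have hsq (j : V) : ∫ ω, Φ (x j) ω ^ 2 ∂P = R s(j, j) := by simp_rw [sq]; rfl
  simp_rw [hsq]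
  refine ((hΦ.comp x).norm_integral_prod_iteratedDeriv_hFun_le (fun _ _ => rfl) hR m r θ).trans ?_
  exact mul_le_mul_of_nonneg_right (le_add_of_nonneg_right zero_le_one)
    ((hΦ.comp x).integral_prod_wick_nonneg (fun _ _ => rfl) hR.nonneg hR.diag_pos m)

/-- Theorem 1.1: uniform multi-point correlation bound
`|E ∏_j ∂_θ^r 𝓗_m(e^{iθΦ_ε(x_j)})| ≤ C · E ∏_j (Φ_ε(x_j)^{⋄m} + Φ_ε(x_j)^{⋄(m+1)})`,
with `C` depending only on `d, s, α, Λ, K, m, r`. -/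
theorem stmt0 (d : ℕ) (hd : 1 ≤ d) (s : Fin d → ℝ) (hs : ∀ j, 1 ≤ s j)
    (α Λ : ℝ) (hα : 0 < α) (hα' : α < ∑ j, s j) (hΛ : 1 < Λ)
    (K : ℕ) (hK : 1 ≤ K) (m r : ℕ) :
    ∃ C > 0, ∀ ε ∈ Set.Ioo (0:ℝ) 1,
      ∀ (Ω : Type) (_ : MeasurableSpace Ω) (P : Measure Ω), IsProbabilityMeasure P →
      ∀ Φ : (Fin d → ℝ) → Ω → ℝ,
        IsCenteredGaussianFamily P Φ →
        CovBound s α Λ ε (fun x y => ∫ ω, Φ x ω * Φ y ω ∂P) →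
        ∀ (θ : ℝ) (x : Fin K → Fin d → ℝ),
          ‖∫ ω, ∏ j, iteratedDeriv r
              (fun t => hFun m t (Φ (x j) ω) (∫ ω', Φ (x j) ω' ^ 2 ∂P)) θ ∂P‖ ≤
            C * ∫ ω, ∏ j,
              (wick (∫ ω', Φ (x j) ω' ^ 2 ∂P) m (Φ (x j) ω) +
                wick (∫ ω', Φ (x j) ω' ^ 2 ∂P) (m + 1) (Φ (x j) ω)) ∂P := by
  obtain ⟨C, hC, h⟩ := stmt0_general hs hα.le hΛ.le (Fin K) m r
  exact ⟨C, hC, fun ε hε Ω _ P _ Φ => h ε hε.1 Ω _ P Φ⟩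
end
end

section
/- Let (X₁, …, X_K) be centered jointly Gaussian real random variables with strictly positive variances and with E(X_i X_j) ≥ 0 for all i ≠ j. Let n₁, …, n_K ∈ ℕ, and let 𝓔 be any multiplicity function on unordered pairs {i,j} ⊆ {1,…,K} with i ≠ j (no self-loops) such that Σ_{j≠i} 𝓔(i,j) = n_i for every i. Then ∏_{i<j} (E(X_i X_j))^{𝓔(i,j)} ≤ E ∏_{i=1}^{K} X_i^{⋄n_i}. In particular the right-hand side is nonnegative. -/
open MeasureTheory ProbabilityTheory Filter

noncomputable section

def pairs (K : ℕ) : Finset (Fin K × Fin K) :=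
  Finset.univ.filter fun p => p.1 < p.2

/-!
Write `E n` for the expectation of the product of Wick powers with exponents `n`, and `C` for the
covariances. Gaussian integration by parts turns the recursion of the Hermite polynomials into
Wick's formula in recursive form, `E (n + eᵢ) = ∑ j ≠ i, C i j * n j * E (n - eⱼ)`. When
`C i j ≥ 0` for `i ≠ j`, every term is nonnegative; keeping only the term of one index `j` for the
exponents `n + eⱼ` gives `C i j * E n ≤ E (n + eᵢ + eⱼ)`. So adding an edge `{i, j}` to a multigraph
multiplies the lower bound by `C i j`, and the edges of `𝓔` are added one at a time, starting from
`E 0 = 1`.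
-/

section WickRecursion

variable {ι R : Type*} [Fintype ι] [DecidableEq ι] [CommSemiring R] {C : ι → ι → R}
  {E : (ι → ℕ) → R}

/-- The recursive form of Wick's formula for the moments `E n` of Wick powers of exponents `n`,
with covariances `C`: one factor of index `i` is contracted with each of the `n j` factors of every
other index `j`. The truncated subtraction at `n j = 0` is harmless, its term being zero. -/
def SatisfiesWickRecursion (C : ι → ι → R) (E : (ι → ℕ) → R) : Prop :=
  ∀ (n : ι → ℕ) (i : ι), E (n + Pi.single i 1) =
    ∑ j ∈ Finset.univ.erase i, C i j * (n j * E (n - Pi.single j 1))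

namespace SatisfiesWickRecursion

variable [PartialOrder R] [IsOrderedRing R]

lemma nonneg (hE : SatisfiesWickRecursion C E) (hC : ∀ i j, i ≠ j → 0 ≤ C i j) (hE0 : 0 ≤ E 0)
    (n : ι → ℕ) : 0 ≤ E n := by
  induction hd : ∑ i, n i using Nat.strong_induction_on generalizing n with
  | _ d ih =>
  obtain rfl | hn := eq_or_ne n 0
  · exact hE0
  obtain ⟨i, hi⟩ := Function.ne_iff.mp hn
  have hn_eq : n - Pi.single i 1 + Pi.single i 1 = n :=
    tsub_add_cancel_of_le
      (update_le_iff.mpr ⟨Nat.one_le_iff_ne_zero.mpr hi, fun _ _ => Nat.zero_le _⟩)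
  have hdegree : ∑ k, (n - Pi.single i 1 : ι → ℕ) k < d := by
    rw [← hd, ← hn_eq]
    simp [Finset.sum_add_distrib]
  rw [← hn_eq, hE]
  refine Finset.sum_nonneg fun j hj => mul_nonneg (hC i j (Finset.ne_of_mem_erase hj).symm)
    (mul_nonneg (Nat.cast_nonneg _) (ih _ ?_ _ rfl))
  exact (Finset.sum_le_sum fun k _ => Nat.sub_le _ _).trans_lt hdegree

lemma mul_le_add_edge (hE : SatisfiesWickRecursion C E) (hC : ∀ i j, i ≠ j → 0 ≤ C i j)
    (hE0 : 0 ≤ E 0) (n : ι → ℕ) {i j : ι} (hij : i ≠ j) :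
    C i j * E n ≤ E (n + (Pi.single i 1 + Pi.single j 1)) := by
  have hE_nonneg := hE.nonneg hC hE0
  let term (k : ι) : R :=
    C i k * ((n + Pi.single j 1 : ι → ℕ) k * E (n + Pi.single j 1 - Pi.single k 1))
  have hterm_nonneg : ∀ k ∈ Finset.univ.erase i, 0 ≤ term k := fun k hk =>
    mul_nonneg (hC i k (Finset.ne_of_mem_erase hk).symm)
      (mul_nonneg (Nat.cast_nonneg _) (hE_nonneg _))
  calc C i j * E n
      ≤ C i j * ((n j + 1) * E n) :=
        mul_le_mul_of_nonneg_left (le_mul_of_one_le_left (hE_nonneg n)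
          (le_add_of_nonneg_left (Nat.cast_nonneg _))) (hC i j hij)
    _ = term j := by simp [term]
    _ ≤ ∑ k ∈ Finset.univ.erase i, term k :=
        Finset.single_le_sum hterm_nonneg (by simp [hij.symm])
    _ = E (n + (Pi.single i 1 + Pi.single j 1)) := by
        rw [add_comm (Pi.single i 1), ← add_assoc, hE]

lemma pow_mul_le_add_nsmul_edge (hE : SatisfiesWickRecursion C E)
    (hC : ∀ i j, i ≠ j → 0 ≤ C i j) (hE0 : 0 ≤ E 0) (n : ι → ℕ) {i j : ι} (hij : i ≠ j) (m : ℕ) :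
    C i j ^ m * E n ≤ E (n + m • (Pi.single i 1 + Pi.single j 1)) := by
  induction m with
  | zero => simp
  | succ m ih =>
    rw [pow_succ', mul_assoc, succ_nsmul, ← add_assoc]
    exact (mul_le_mul_of_nonneg_left ih (hC i j hij)).trans (hE.mul_le_add_edge hC hE0 _ hij)

lemma prod_pow_mul_le_add_sum_edges (hE : SatisfiesWickRecursion C E)
    (hC : ∀ i j, i ≠ j → 0 ≤ C i j) (hE0 : 0 ≤ E 0) (n : ι → ℕ) (m : ι × ι → ℕ)
    (s : Finset (ι × ι)) (hs : ∀ p ∈ s, p.1 ≠ p.2) :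
    (∏ p ∈ s, C p.1 p.2 ^ m p) * E n ≤
      E (n + ∑ p ∈ s, m p • (Pi.single p.1 1 + Pi.single p.2 1)) := by
  induction s using Finset.cons_induction with
  | empty => simp
  | cons p s hp ih =>
    rw [Finset.forall_mem_cons] at hs
    rw [Finset.prod_cons, Finset.sum_cons, mul_assoc, add_comm (m p • _), ← add_assoc]
    exact (mul_le_mul_of_nonneg_left (ih hs.2) (pow_nonneg (hC _ _ hs.1) _)).trans
      (hE.pow_mul_le_add_nsmul_edge hC hE0 _ hs.1 _)

end SatisfiesWickRecursion

end WickRecursion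

lemma sum_edges_eq_degree {ι : Type*} [Fintype ι] [LinearOrder ι] (𝓔 : ι → ι → ℕ)
    (hsymm : ∀ i j, 𝓔 i j = 𝓔 j i) (hdiag : ∀ i, 𝓔 i i = 0) :
    ∑ p : ι × ι with p.1 < p.2, 𝓔 p.1 p.2 • (Pi.single p.1 1 + Pi.single p.2 1 : ι → ℕ) =
      fun i => ∑ j, 𝓔 i j := by
  funext i
  have hsplit (j : ι) : 𝓔 i j = (if i < j then 𝓔 i j else 0) + if j < i then 𝓔 j i else 0 := by
    rcases lt_trichotomy i j with h | rfl | h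
    · simp [h, h.not_gt]
    · simp [hdiag]
    · simp [h, h.not_gt, hsymm i j]
  rw [Finset.sum_congr rfl fun j _ => hsplit j]
  simp only [Finset.sum_apply, Pi.smul_apply, Pi.add_apply, smul_eq_mul, Finset.sum_filter,
    Fintype.sum_prod_type, mul_add, Pi.single_apply, Finset.sum_add_distrib]
  congr 1
  · exact (Fintype.sum_eq_single i fun k hk => by simp [hk.symm]).trans (by simp)
  · rw [Finset.sum_comm]
    exact (Fintype.sum_eq_single i fun k hk => by simp [hk.symm]).trans (by simp)

section WickPolynomial

open Polynomial

variable {R : Type*} [CommRing R]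

/-- The Wick power `X^{⋄n}` of a centered Gaussian variable of variance `v`, as a polynomial in
that variable: the Hermite polynomial rescaled to variance `v`. -/
def wickPoly (v : R) : ℕ → R[X]
  | 0 => 1
  | n + 1 => X * wickPoly v n - C v * derivative (wickPoly v n)

lemma wickPoly_succ (v : R) (n : ℕ) :
    wickPoly v (n + 1) = X * wickPoly v n - C v * derivative (wickPoly v n) := rfl

lemma derivative_wickPoly_succ (v : R) (n : ℕ) :
    derivative (wickPoly v (n + 1)) = (n + 1 : R[X]) * wickPoly v n := by
  induction n with
  | zero => simp [wickPoly]
  | succ n ih =>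
    have hderiv : derivative ((n + 1 : R[X]) * wickPoly v n) =
        (n + 1 : R[X]) * derivative (wickPoly v n) := by
      simp [derivative_mul]
    rw [wickPoly_succ, derivative_sub, derivative_mul, derivative_C_mul, ih, hderiv, derivative_X,
      wickPoly_succ, Nat.cast_succ]
    ring

lemma derivative_wickPoly (v : R) (n : ℕ) :
    derivative (wickPoly v n) = (n : R[X]) * wickPoly v (n - 1) := by
  cases n with
  | zero => simp [wickPoly]
  | succ n => simpa using derivative_wickPoly_succ v n

lemma wickPoly_sq_eq_C_mul_hermite_comp {K : Type*} [Field K] {s : K} (hs : s ≠ 0) (n : ℕ) :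
    wickPoly (s ^ 2) n =
      C (s ^ n) * ((hermite n).map (Int.castRingHom K)).comp (C s⁻¹ * X) := by
  induction n with
  | zero => simp [wickPoly]
  | succ n ih =>
    have hCs : (C s * C s⁻¹ : K[X]) = 1 := by rw [← C_mul, mul_inv_cancel₀ hs, C_1]
    rw [wickPoly_succ, ih, hermite_succ, derivative_C_mul, derivative_comp]
    simp only [derivative_C_mul, Polynomial.map_sub, Polynomial.map_mul, map_X, sub_comp, mul_comp,
      X_comp, derivative_X, derivative_map, C_pow, mul_one]
    linear_combination (-(C s ^ n * X * ((hermite n).map (Int.castRingHom K)).comp (C s⁻¹ * X))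
      - C s ^ (n + 1) *
        ((derivative (hermite n)).map (Int.castRingHom K)).comp (C s⁻¹ * X)) * hCs

lemma eval_wickPoly {v : ℝ} (hv : 0 < v) (n : ℕ) (x : ℝ) :
    (wickPoly v n).eval x = wick v n x := by
  have hs : √v ≠ 0 := (Real.sqrt_pos.mpr hv).ne'
  rw [← Real.sq_sqrt hv.le, wickPoly_sq_eq_C_mul_hermite_comp hs, Real.sq_sqrt hv.le]
  simp [wick, eval_comp, aeval_def, eval₂_eq_eval_map, div_eq_inv_mul]

end WickPolynomial

section MvPolynomial

open MvPolynomial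

section Derivatives

variable {ι R : Type*} [CommSemiring R]

lemma pderiv_toMvPolynomial_self (i : ι) (p : Polynomial R) :
    pderiv i (p.toMvPolynomial i) = p.derivative.toMvPolynomial i := by
  induction p using Polynomial.induction_on with
  | C a => simp
  | add p q hp hq => simp [hp, hq]
  | monomial n a _ => simp

lemma pderiv_toMvPolynomial_of_ne {i j : ι} (hij : i ≠ j) (p : Polynomial R) :
    pderiv i (p.toMvPolynomial j) = 0 := by
  induction p using Polynomial.induction_on with
  | C a => simp
  | add p q hp hq => simp [hp, hq]
  | monomial n a _ => simp [Derivation.leibniz, pderiv_X_of_ne hij.symm]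

lemma pderiv_prod_toMvPolynomial_of_notMem {i : ι} {s : Finset ι} (hi : i ∉ s)
    (q : ι → Polynomial R) : pderiv i (∏ k ∈ s, (q k).toMvPolynomial k) = 0 := by
  induction s using Finset.cons_induction with
  | empty => simp
  | cons k s hk ih =>
    rw [Finset.mem_cons, not_or] at hi
    rw [Finset.prod_cons, pderiv_mul, ih hi.2, pderiv_toMvPolynomial_of_ne hi.1, zero_mul,
      mul_zero, add_zero]

lemma derivative_aeval_eq_sum_pderiv [Fintype ι] (g : ι → Polynomial R) (f : MvPolynomial ι R) :
    (aeval g f).derivative = ∑ i, aeval g (pderiv i f) * (g i).derivative := by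
  classical
  induction f using MvPolynomial.induction_on with
  | C a => simp
  | add p q hp hq => simp [hp, hq, add_mul, Finset.sum_add_distrib]
  | mul_X p i hp =>
    have hterm (j : ι) : aeval g (pderiv j (p * X i)) * (g j).derivative =
        aeval g (pderiv j p) * (g j).derivative * g i +
          if j = i then aeval g p * (g i).derivative else 0 := by
      split_ifs with hj
      · subst hj
        rw [pderiv_mul, pderiv_X_self]
        simp only [map_add, map_mul, aeval_X, map_one]
        ring
      · rw [pderiv_mul, pderiv_X_of_ne (Ne.symm hj)]
        simp only [map_add, map_mul, aeval_X, map_zero]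
        ring
    rw [map_mul, aeval_X, Polynomial.derivative_mul, hp, Finset.sum_congr rfl fun j _ => hterm j,
      Finset.sum_add_distrib, Finset.sum_mul, Fintype.sum_ite_eq']

end Derivatives

variable {ι R : Type*} [Fintype ι] [CommRing R]

/-- The product `∏ i, X_i^{⋄ n i}` of Wick powers of centered Gaussian variables of variances `v i`,
as a polynomial in these variables. -/
def wickProd (v : ι → R) (n : ι → ℕ) : MvPolynomial ι R :=
  ∏ i, (wickPoly (v i) (n i)).toMvPolynomial i

lemma eval_wickProd {v : ι → ℝ} (hv : ∀ i, 0 < v i) (n : ι → ℕ) (x : ι → ℝ) :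
    eval x (wickProd v n) = ∏ i, wick (v i) (n i) (x i) := by
  simp [wickProd, eval_wickPoly (hv _)]

variable [DecidableEq ι]

lemma wickProd_eq_mul_prod_erase (v : ι → R) {m n : ι → ℕ} (i : ι) (hmn : ∀ k ≠ i, m k = n k) :
    wickProd v m = (wickPoly (v i) (m i)).toMvPolynomial i *
      ∏ k ∈ Finset.univ.erase i, (wickPoly (v k) (n k)).toMvPolynomial k := by
  rw [wickProd, ← Finset.mul_prod_erase _ _ (Finset.mem_univ i)]
  congr 1
  exact Finset.prod_congr rfl fun k hk => by rw [hmn k (Finset.ne_of_mem_erase hk)]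

lemma pderiv_wickProd_eq_mul_prod_erase (v : ι → R) (n : ι → ℕ) (i : ι) :
    pderiv i (wickProd v n) = (wickPoly (v i) (n i)).derivative.toMvPolynomial i *
      ∏ k ∈ Finset.univ.erase i, (wickPoly (v k) (n k)).toMvPolynomial k := by
  rw [wickProd_eq_mul_prod_erase v i fun _ _ => rfl, pderiv_mul,
    pderiv_prod_toMvPolynomial_of_notMem (Finset.notMem_erase i _) fun k => wickPoly (v k) (n k),
    mul_zero, add_zero, pderiv_toMvPolynomial_self]

lemma pderiv_wickProd (v : ι → R) (n : ι → ℕ) (i : ι) :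
    pderiv i (wickProd v n) = (n i : MvPolynomial ι R) * wickProd v (n - Pi.single i 1) := by
  have hne (k : ι) (hk : k ≠ i) : (n - Pi.single i 1 : ι → ℕ) k = n k := by simp [hk]
  rw [pderiv_wickProd_eq_mul_prod_erase, derivative_wickPoly, wickProd_eq_mul_prod_erase v i hne]
  simp [mul_assoc]

lemma wickProd_add_single (v : ι → R) (n : ι → ℕ) (i : ι) :
    wickProd v (n + Pi.single i 1) = X i * wickProd v n - C (v i) * pderiv i (wickProd v n) := by
  have hne (k : ι) (hk : k ≠ i) : (n + Pi.single i 1 : ι → ℕ) k = n k := by simp [hk]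
  rw [pderiv_wickProd_eq_mul_prod_erase, wickProd_eq_mul_prod_erase v i hne,
    wickProd_eq_mul_prod_erase v (m := n) i fun _ _ => rfl]
  simp [wickPoly_succ, sub_mul, mul_assoc]

end MvPolynomial

section Integrability

variable {Ω : Type*} [MeasurableSpace Ω] {P : Measure Ω}

lemma memLp_mul_of_forall_ne_top {f g : Ω → ℝ} (hf : ∀ p : ENNReal, p ≠ ⊤ → MemLp f p P)
    (hg : ∀ p : ENNReal, p ≠ ⊤ → MemLp g p P) {p : ENNReal} (hp : p ≠ ⊤) :
    MemLp (fun ω => f ω * g ω) p P := by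
  have : ENNReal.HolderTriple (2 * p) (2 * p) p := by
    constructor
    rw [ENNReal.mul_inv (by simp) (by simp), ← add_mul, ENNReal.inv_two_add_inv_two, one_mul]
  have h2p : 2 * p ≠ ⊤ := ENNReal.mul_ne_top (by simp) hp
  exact (hg _ h2p).mul' (hf _ h2p)

lemma memLp_eval_mvPolynomial [IsFiniteMeasure P] {ι : Type*} {X : ι → Ω → ℝ}
    (hX : ∀ i, ∀ p : ENNReal, p ≠ ⊤ → MemLp (X i) p P) (f : MvPolynomial ι ℝ) {p : ENNReal}
    (hp : p ≠ ⊤) : MemLp (fun ω => MvPolynomial.eval (X · ω) f) p P := by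
  induction f using MvPolynomial.induction_on generalizing p with
  | C a => simpa using memLp_const a
  | add f g hf hg => simpa [Pi.add_def] using! (hf hp).add (hg hp)
  | mul_X f i hf =>
    simpa using memLp_mul_of_forall_ne_top (fun _ => hf) (hX i) hp

lemma integrable_eval_mvPolynomial {ι : Type*} {X : ι → Ω → ℝ}
    (hX : HasGaussianLaw (fun ω => (X · ω)) P) (f : MvPolynomial ι ℝ) :
    Integrable (fun ω => MvPolynomial.eval (X · ω) f) P := by
  have := hX.isProbabilityMeasure
  exact memLp_one_iff_integrable.mp
    (memLp_eval_mvPolynomial (fun i _ hp => (hX.eval i).memLp hp) f ENNReal.one_ne_top)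

lemma integrable_eval_gaussianReal (μ : ℝ) (v : NNReal) (q : Polynomial ℝ) :
    Integrable (fun x => q.eval x) (gaussianReal μ v) := by
  simpa using memLp_one_iff_integrable.mp (memLp_eval_mvPolynomial (P := gaussianReal μ v)
    (fun (_ : Unit) _ hp => memLp_id_gaussianReal' _ hp) (q.toMvPolynomial ()) ENNReal.one_ne_top)

end Integrability

section Stein

open Polynomial

lemma hasDerivAt_gaussianPDFReal (μ : ℝ) (v : NNReal) (x : ℝ) :
    HasDerivAt (gaussianPDFReal μ v) (-((x - μ) / v) * gaussianPDFReal μ v x) x := by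
  have hexponent : HasDerivAt (fun y : ℝ => -(y - μ) ^ 2 / (2 * v)) (-((x - μ) / v)) x :=
    ((((hasDerivAt_id x).sub_const μ).pow 2).neg.div_const (2 * (v : ℝ))).congr_deriv
      (by simp [neg_div, mul_div_mul_left])
  refine (hexponent.exp.const_mul (√(2 * Real.pi * v))⁻¹).congr_deriv ?_
  simp only [gaussianPDFReal]
  ring

lemma integrable_eval_mul_gaussianPDFReal (μ : ℝ) {v : NNReal} (hv : v ≠ 0) (q : ℝ[X]) :
    Integrable (fun x => q.eval x * gaussianPDFReal μ v x) := by
  have hq := integrable_eval_gaussianReal μ v q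
  rw [gaussianReal_of_var_ne_zero _ hv, integrable_withDensity_iff_integrable_smul'
    (measurable_gaussianPDF _ _) (ae_of_all _ fun _ => gaussianPDF_lt_top)] at hq
  simpa [toReal_gaussianPDF, mul_comm] using hq

lemma integral_sub_mul_eval_gaussianReal (μ : ℝ) (v : NNReal) (q : ℝ[X]) :
    ∫ x, (x - μ) * q.eval x ∂gaussianReal μ v = v * ∫ x, q.derivative.eval x ∂gaussianReal μ v := by
  obtain rfl | hv := eq_or_ne v 0
  · simp
  have hparts := integral_mul_deriv_eq_deriv_mul_of_integrable
    (fun x _ => q.hasDerivAt x) (fun x _ => hasDerivAt_gaussianPDFReal μ v x)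
    ((integrable_eval_mul_gaussianPDFReal μ hv (q * (C (-(v : ℝ)⁻¹) * (X - C μ)))).congr
      (ae_of_all _ fun x => by simp only [eval_mul, eval_C, eval_sub, eval_X, Pi.mul_apply]; ring))
    (integrable_eval_mul_gaussianPDFReal μ hv _)
    (integrable_eval_mul_gaussianPDFReal μ hv q)
  rw [integral_gaussianReal_eq_integral_smul hv, integral_gaussianReal_eq_integral_smul hv]
  simp only [smul_eq_mul, mul_comm (gaussianPDFReal μ v _) (eval _ _)]
  rw [← neg_eq_iff_eq_neg.mpr hparts, ← integral_neg, ← integral_const_mul]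
  congr 1 with x
  field_simp

end Stein

section GaussianVector

open MvPolynomial

variable {ι Ω : Type*} [MeasurableSpace Ω] {P : Measure Ω} {X : ι → Ω → ℝ}

lemma covariance_eq_zero_of_variance_eq_zero [IsFiniteMeasure P] {Y Z : Ω → ℝ}
    (hY : MemLp Y 2 P) (hvar : Var[Y; P] = 0) : cov[Y, Z; P] = 0 :=
  integral_eq_zero_of_ae <| (ae_eq_integral_of_variance_eq_zero hY hvar).mono fun ω hω => by
    simp [hω]

lemma integral_comp_prodMk_of_indepFun {E F : Type*} [MeasurableSpace E] [MeasurableSpace F]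
    [IsProbabilityMeasure P] {Y : Ω → E} {Z : Ω → F} (hY : AEMeasurable Y P)
    (hZ : AEMeasurable Z P) (hYZ : IndepFun Y Z P) {f : E × F → ℝ} (hf : Measurable f)
    (hf_int : Integrable (fun ω => f (Y ω, Z ω)) P) :
    ∫ ω, f (Y ω, Z ω) ∂P = ∫ z, ∫ y, f (y, z) ∂P.map Y ∂P.map Z := by
  have hmap := (indepFun_iff_map_prod_eq_prod_map_map hY hZ).mp hYZ
  have hfm : AEStronglyMeasurable f (P.map fun ω => (Y ω, Z ω)) := hf.aestronglyMeasurable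
  have hf_int_map := (integrable_map_measure hfm (hY.prodMk hZ)).mpr hf_int
  have := Measure.isProbabilityMeasure_map hY (μ := P)
  have := Measure.isProbabilityMeasure_map hZ (μ := P)
  rw [← integral_map (hY.prodMk hZ) hfm, hmap]
  rw [hmap] at hf_int_map
  exact integral_prod_symm f hf_int_map

/-- If `Var[X i; P] = 0`, the quotient is `0`, and `X i` is almost surely constant. -/
lemma indepFun_regression_residual [Finite ι] (hX : HasGaussianLaw (fun ω => (X · ω)) P)
    (i : ι) :
    IndepFun (X i) (fun ω j => X j ω - cov[X i, X j; P] / Var[X i; P] * X i ω) P := by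
  have := Fintype.ofFinite ι
  have := hX.isProbabilityMeasure
  have hL (k : ι) : MemLp (X k) 2 P := (hX.eval k).memLp_two
  let a (j : ι) : ℝ := cov[X i, X j; P] / Var[X i; P]
  have hlaw : HasGaussianLaw
      (fun ω => ((fun _ : Unit => X i ω), (fun j => X j ω - a j * X i ω))) P := by
    let π (j : ι) : (ι → ℝ) →L[ℝ] ℝ := ContinuousLinearMap.proj j
    exact hX.map_fun ((ContinuousLinearMap.pi fun _ : Unit => π i).prod
      (ContinuousLinearMap.pi fun j => π j - a j • π i))
  have huncorrelated (j : ι) : cov[X i, fun ω => X j ω - a j * X i ω; P] = 0 := by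
    rw [covariance_fun_sub_right (hL i) (hL j) ((hL i).const_mul _), covariance_const_mul_right,
      covariance_self (hX.eval i).aemeasurable,
      div_mul_cancel_of_imp (covariance_eq_zero_of_variance_eq_zero (hL i)), sub_self]
  exact (hlaw.indepFun_of_covariance_eval (X := fun (_ : Unit) ω => X i ω)
    (Y := fun j ω => X j ω - a j * X i ω) fun _ j => huncorrelated j).comp
      (measurable_pi_apply ()) measurable_id

variable [Fintype ι]

lemma integral_sub_mul_eval_affine_gaussianReal (μ : ℝ) (v : NNReal) (a z : ι → ℝ)
    (f : MvPolynomial ι ℝ) :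
    ∫ x, (x - μ) * eval (fun j => a j * x + z j) f ∂gaussianReal μ v =
      ∫ x, ∑ j, a j * v * eval (fun j => a j * x + z j) (pderiv j f) ∂gaussianReal μ v := by
  let g (j : ι) : Polynomial ℝ := Polynomial.C (a j) * Polynomial.X + Polynomial.C (z j)
  have heval (h : MvPolynomial ι ℝ) (x : ℝ) :
      eval (fun j => a j * x + z j) h = (aeval g h).eval x := by
    rw [← Polynomial.coe_aeval_eq_eval, comp_aeval_apply]
    simp [g]
  have hg (j : ι) : (g j).derivative = Polynomial.C (a j) := by simp [g]
  simp only [heval]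
  rw [integral_sub_mul_eval_gaussianReal, derivative_aeval_eq_sum_pderiv, ← integral_const_mul]
  congr 1 with x
  simp only [hg, Polynomial.eval_finsetSum, Polynomial.eval_mul, Polynomial.eval_C, Finset.mul_sum]
  exact Finset.sum_congr rfl fun j _ => by ring

/-- Gaussian integration by parts. Conditionally on the residual `Z` of the regression of `X` on
`X i`, which is independent of `X i`, it is the one-dimensional formula. -/
lemma integral_sub_mul_eval_eq_sum_covariance (hX : HasGaussianLaw (fun ω => (X · ω)) P) (i : ι)
    (f : MvPolynomial ι ℝ) :
    ∫ ω, (X i ω - P[X i]) * eval (X · ω) f ∂P =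
      ∑ j, cov[X i, X j; P] * ∫ ω, eval (X · ω) (pderiv j f) ∂P := by
  have := hX.isProbabilityMeasure
  let v : NNReal := Var[X i; P].toNNReal
  let a (j : ι) : ℝ := cov[X i, X j; P] / Var[X i; P]
  have hav (j : ι) : a j * v = cov[X i, X j; P] := by
    rw [Real.coe_toNNReal _ (variance_nonneg _ _), div_mul_cancel_of_imp
      (covariance_eq_zero_of_variance_eq_zero (hX.eval i).memLp_two)]
  let Z (ω : Ω) (j : ι) : ℝ := X j ω - a j * X i ω
  have hX_eq (ω : Ω) : (X · ω) = fun j => a j * X i ω + Z ω j := by simp [Z]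
  have hXi : AEMeasurable (X i) P := (hX.eval i).aemeasurable
  have hZ : AEMeasurable Z P := aemeasurable_pi_lambda _ fun j =>
    (hX.eval j).aemeasurable.sub (hXi.const_mul _)
  have heval_cont (h : MvPolynomial ι ℝ) :
      Continuous fun w : ℝ × (ι → ℝ) => eval (fun j => a j * w.1 + w.2 j) h :=
    h.continuous_eval.comp (by fun_prop)
  let G (w : ℝ × (ι → ℝ)) : ℝ := (w.1 - P[X i]) * eval (fun j => a j * w.1 + w.2 j) f
  let H (w : ℝ × (ι → ℝ)) : ℝ := ∑ j, a j * v * eval (fun j => a j * w.1 + w.2 j) (pderiv j f)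
  have hterm (j : ι) : Integrable (fun ω => cov[X i, X j; P] * eval (X · ω) (pderiv j f)) P :=
    (integrable_eval_mvPolynomial hX _).const_mul _
  have hG_int : Integrable (fun ω => G (X i ω, Z ω)) P := by
    have := integrable_eval_mvPolynomial hX ((MvPolynomial.X i - C P[X i]) * f)
    simpa only [G, ← hX_eq, map_mul, map_sub, eval_X, eval_C] using this
  have hH_int : Integrable (fun ω => H (X i ω, Z ω)) P := by
    simpa only [H, hav, ← hX_eq] using integrable_finsetSum _ fun j _ => hterm j
  have hGH : ∫ ω, G (X i ω, Z ω) ∂P = ∫ ω, H (X i ω, Z ω) ∂P := by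
    have hindep : IndepFun (X i) Z P := indepFun_regression_residual hX i
    rw [integral_comp_prodMk_of_indepFun hXi hZ hindep (by fun_prop) hG_int,
      integral_comp_prodMk_of_indepFun hXi hZ hindep (by fun_prop) hH_int,
      (hX.eval i).map_eq_gaussianReal]
    congr 1 with z
    exact integral_sub_mul_eval_affine_gaussianReal _ v a z f
  simp only [G, H, hav, ← hX_eq] at hGH
  rw [hGH, integral_finsetSum _ fun j _ => hterm j]
  simp only [integral_const_mul]

lemma satisfiesWickRecursion_integral_wickProd [DecidableEq ι]
    (hX : HasGaussianLaw (fun ω => (X · ω)) P) (hX0 : ∀ i, P[X i] = 0) :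
    SatisfiesWickRecursion (fun i j => cov[X i, X j; P])
      fun n => ∫ ω, eval (X · ω) (wickProd (fun i => Var[X i; P]) n) ∂P := by
  intro n i
  let v (k : ι) : ℝ := Var[X k; P]
  let contraction (j : ι) : ℝ := cov[X i, X j; P] *
    ∫ ω, eval (X · ω) (pderiv j (wickProd v n)) ∂P
  have hparts : ∫ ω, eval (X · ω) (MvPolynomial.X i * wickProd v n) ∂P = ∑ j, contraction j := by
    simpa [hX0] using integral_sub_mul_eval_eq_sum_covariance hX i (wickProd v n)
  have hself : ∫ ω, eval (X · ω) (C (v i) * pderiv i (wickProd v n)) ∂P = contraction i := by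
    simp [contraction, v, covariance_self (hX.eval i).aemeasurable, integral_const_mul]
  calc ∫ ω, eval (X · ω) (wickProd v (n + Pi.single i 1)) ∂P
      = ∑ j, contraction j - contraction i := by
        simp only [wickProd_add_single, map_sub]
        rw [integral_sub (integrable_eval_mvPolynomial hX _) (integrable_eval_mvPolynomial hX _),
          hparts, hself]
    _ = ∑ j ∈ Finset.univ.erase i, contraction j := by
        rw [Finset.sum_erase_eq_sub (Finset.mem_univ i)]
    _ = _ := by
        simp [contraction, pderiv_wickProd, integral_const_mul, v]

end GaussianVector

namespace IsCenteredGaussianFamily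

variable {ι Ω : Type*} [MeasurableSpace Ω] {P : Measure Ω} {X : ι → Ω → ℝ}

lemma exists_map_eq_gaussianReal (hX : IsCenteredGaussianFamily P X)
    (i : ι) : ∃ v, P.map (X i) = gaussianReal 0 v := by
  simpa using hX {i} 1

lemma aemeasurable (hX : IsCenteredGaussianFamily P X) (i : ι) :
    AEMeasurable (X i) P := by
  obtain ⟨v, hv⟩ := hX.exists_map_eq_gaussianReal i
  exact AEMeasurable.of_map_ne_zero (hv ▸ IsProbabilityMeasure.ne_zero _)

lemma integral_eq_zero (hX : IsCenteredGaussianFamily P X) (i : ι) :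
    P[X i] = 0 := by
  obtain ⟨v, hv⟩ := hX.exists_map_eq_gaussianReal i
  calc P[X i] = ∫ x, x ∂P.map (X i) :=
        (integral_map (hX.aemeasurable i) aestronglyMeasurable_id).symm
    _ = 0 := by rw [hv, integral_id_gaussianReal]

lemma hasGaussianLaw_s4 [Finite ι] (hX : IsCenteredGaussianFamily P X) :
    HasGaussianLaw (fun ω => (X · ω)) P where
  isGaussian_map := by
    classical
    have := Fintype.ofFinite ι
    refine isGaussian_of_map_eq_gaussianReal fun L => ?_
    obtain ⟨v, hv⟩ := hX Finset.univ fun i => L (Pi.single i 1)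
    refine ⟨0, v, ?_⟩
    rw [← hv, AEMeasurable.map_map_of_aemeasurable (by fun_prop)
      (aemeasurable_pi_lambda _ hX.aemeasurable)]
    congr 1 with ω
    rw [Function.comp_apply, ← Finset.univ_sum_single (X · ω), map_sum]
    refine Finset.sum_congr rfl fun i _ => ?_
    rw [mul_comm, ← smul_eq_mul, ← map_smul, ← Pi.single_smul, smul_eq_mul, mul_one]

lemma covariance_eq (hX : IsCenteredGaussianFamily P X) (i j : ι) :
    cov[X i, X j; P] = ∫ ω, X i ω * X j ω ∂P := by
  simp [covariance, hX.integral_eq_zero]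

lemma variance_eq (hX : IsCenteredGaussianFamily P X) (i : ι) :
    Var[X i; P] = ∫ ω, X i ω ^ 2 ∂P :=
  variance_of_integral_eq_zero (hX.aemeasurable i) (hX.integral_eq_zero i)

end IsCenteredGaussianFamily

theorem stmt4_general {ι Ω : Type*} [Fintype ι] [LinearOrder ι] [MeasurableSpace Ω]
    {P : Measure Ω} {X : ι → Ω → ℝ} (hGauss : IsCenteredGaussianFamily P X)
    (hvar : ∀ i, 0 < ∫ ω, X i ω ^ 2 ∂P) (hpos : ∀ i j, i ≠ j → 0 ≤ ∫ ω, X i ω * X j ω ∂P)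
    (n : ι → ℕ) (𝓔 : ι → ι → ℕ) (hsymm : ∀ i j, 𝓔 i j = 𝓔 j i) (hdiag : ∀ i, 𝓔 i i = 0) :
    (∏ p : ι × ι with p.1 < p.2, (∫ ω, X p.1 ω * X p.2 ω ∂P) ^ 𝓔 p.1 p.2) *
        ∫ ω, ∏ i, wick (∫ ω', X i ω' ^ 2 ∂P) (n i) (X i ω) ∂P ≤
      ∫ ω, ∏ i, wick (∫ ω', X i ω' ^ 2 ∂P) (n i + ∑ j, 𝓔 i j) (X i ω) ∂P := by
  have hX := hGauss.hasGaussianLaw_s4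
  have := hX.isProbabilityMeasure
  have hrec := satisfiesWickRecursion_integral_wickProd hX hGauss.integral_eq_zero
  simp only [hGauss.covariance_eq, hGauss.variance_eq, eval_wickProd hvar] at hrec
  have hedges := hrec.prod_pow_mul_le_add_sum_edges hpos (by simp [wick]) n (fun p => 𝓔 p.1 p.2)
    {p | p.1 < p.2} (by simpa using fun _ _ h => ne_of_lt h)
  rwa [sum_edges_eq_degree 𝓔 hsymm hdiag] at hedges

/-- positivity step from Wick's formula. For jointly Gaussian `X₁,…,X_K`
with nonnegative covariances, any multigraph `𝓔` (no self-loops) realizing the degrees `n_i`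
satisfies `∏_{i<j} (E X_i X_j)^{𝓔(i,j)} ≤ E ∏_i X_i^{⋄n_i}`. -/
theorem stmt4 (K : ℕ) (hK : 1 ≤ K)
    (Ω : Type) [MeasurableSpace Ω] (P : Measure Ω) [IsProbabilityMeasure P]
    (X : Fin K → Ω → ℝ) (hGauss : IsCenteredGaussianFamily P X)
    (hvar : ∀ i, 0 < ∫ ω, X i ω ^ 2 ∂P)
    (hpos : ∀ i j, i ≠ j → 0 ≤ ∫ ω, X i ω * X j ω ∂P)
    (n : Fin K → ℕ) (𝓔 : Fin K → Fin K → ℕ)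
    (hsymm : ∀ i j, 𝓔 i j = 𝓔 j i) (hdiag : ∀ i, 𝓔 i i = 0)
    (hdeg : ∀ i, ∑ j, 𝓔 i j = n i) :
    ∏ p ∈ pairs K, (∫ ω, X p.1 ω * X p.2 ω ∂P) ^ 𝓔 p.1 p.2 ≤
      ∫ ω, ∏ i, wick (∫ ω', X i ω' ^ 2 ∂P) (n i) (X i ω) ∂P := by
  simpa [pairs, wick, hdeg] using stmt4_general hGauss hvar hpos 0 𝓔 hsymm hdiag
end
end
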